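/- Assume omega_1, omega_2 : (0,1) -> C are differentiable, with omega_1(t), omega_2(t) R-linearly independent for every t, and that g_2(t) and g_3(t) are algebraic over C(t). Let a : (0,1) -> C be differentiable with a(t) not in Lambda(t) for all t, such that t -> wp(a(t),t) is algebraic over C(t) and t -> (d wp/d omega)(a(t),t) is not identically zero. Then the functions t -> a(t) and t -> zeta_{Lambda(t)}(a(t)) are D-finite: each satisfies a non-trivial linear differential equation in t with coefficients in C(t). -/

import Mathlib

open scoped BigOperators

namespace WeierstrassElliptic

/-- The lattice `ℤω₁ + ℤω₂ ⊆ ℂ`. -/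
def latticeSet (ω₁ ω₂ : ℂ) : Set ℂ :=
  {z | ∃ m n : ℤ, z = (m : ℂ) * ω₁ + (n : ℂ) * ω₂}

/-- The point of the lattice indexed by `p ∈ ℤ × ℤ`. -/
def latPt (ω₁ ω₂ : ℂ) (p : ℤ × ℤ) : ℂ := (p.1 : ℂ) * ω₁ + (p.2 : ℂ) * ω₂

/-- The Weierstrass `℘`-function of the lattice `ℤω₁ + ℤω₂`:
`℘(z) = z⁻² + ∑_{λ ∈ Λ, λ ≠ 0} ((z+λ)⁻² - λ⁻²)`. -/
noncomputable def wp (ω₁ ω₂ : ℂ) (z : ℂ) : ℂ :=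
  (z ^ 2)⁻¹ + ∑' p : ℤ × ℤ,
    if p = 0 then 0
    else ((z + latPt ω₁ ω₂ p) ^ 2)⁻¹ - ((latPt ω₁ ω₂ p) ^ 2)⁻¹

/-- The invariant `g₂ = 60 ∑_{λ ∈ Λ, λ ≠ 0} λ⁻⁴`. -/
noncomputable def g2 (ω₁ ω₂ : ℂ) : ℂ :=
  60 * ∑' p : ℤ × ℤ, if p = 0 then 0 else ((latPt ω₁ ω₂ p) ^ 4)⁻¹

/-- The invariant `g₃ = 140 ∑_{λ ∈ Λ, λ ≠ 0} λ⁻⁶`. -/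
noncomputable def g3 (ω₁ ω₂ : ℂ) : ℂ :=
  140 * ∑' p : ℤ × ℤ, if p = 0 then 0 else ((latPt ω₁ ω₂ p) ^ 6)⁻¹

/-- The Weierstrass `ζ`-function:
`ζ(z) = z⁻¹ + ∑_{λ ∈ Λ, λ ≠ 0} ((z-λ)⁻¹ + λ⁻¹ + z λ⁻²)`. -/
noncomputable def wzeta (ω₁ ω₂ : ℂ) (z : ℂ) : ℂ :=
  z⁻¹ + ∑' p : ℤ × ℤ,
    if p = 0 then 0
    else (z - latPt ω₁ ω₂ p)⁻¹ + (latPt ω₁ ω₂ p)⁻¹ + z * ((latPt ω₁ ω₂ p) ^ 2)⁻¹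

/-- A function `c : (0,1) → ℂ` (defined on all of `ℝ`, but only its restriction to `(0,1)`
matters) is algebraic over `ℂ(t)` if there is a nonzero polynomial `P ∈ ℂ[T,Z]` with
`P(t, c(t)) = 0` for all `t ∈ (0,1)`.  Here `T = X 0` and `Z = X 1`. -/
def AlgebraicOverCt (c : ℝ → ℂ) : Prop :=
  ∃ P : MvPolynomial (Fin 2) ℂ, P ≠ 0 ∧
    ∀ t ∈ Set.Ioo (0 : ℝ) 1, MvPolynomial.eval ![(t : ℂ), c t] P = 0

/-- Membership in the set `X`: `b : (0,1) → ℂ` is such that for every `t`, either `b(t)`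
lies in the lattice `Λ(t)` (a pole of `℘`), or `t ↦ ℘(b(t),t)` is algebraic over `ℂ(t)`. -/
def MemX (ω₁ ω₂ b : ℝ → ℂ) : Prop :=
  ∀ t ∈ Set.Ioo (0 : ℝ) 1,
    b t ∈ latticeSet (ω₁ t) (ω₂ t) ∨
      AlgebraicOverCt (fun s => wp (ω₁ s) (ω₂ s) (b s))

end WeierstrassElliptic

namespace WeierstrassElliptic

/-- A function `g : (0,1) → ℂ` is D-finite (over `ℂ(t)`) if it satisfies a non-trivial
linear differential equation in `t` with polynomial coefficients, on `(0,1)`. -/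
def DFiniteT (g : ℝ → ℂ) : Prop :=
  ∃ (m : ℕ) (c : Fin (m + 1) → Polynomial ℂ), (∃ i, c i ≠ 0) ∧
    ∀ t ∈ Set.Ioo (0 : ℝ) 1,
      ∑ i : Fin (m + 1), (c i).eval (t : ℂ) * iteratedDeriv (i : ℕ) g t = 0

open Filter Topology Polynomial

/-!
Differentiating `℘'² = 4℘³ - g₂℘ - g₃` along the moving lattice shows that the variation of `℘` in
`t` is `℘' (αζ + βz) + 2α℘² + 2β℘ - αg₂/3`, where `α` and `β` solve the linear system
`g₂' = 4βg₂ + 6αg₃`, `g₃' = 6βg₃ + αg₂²/3` and are therefore algebraic, its determinant being a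
multiple of the discriminant. The variations of `℘'` and `ζ` follow. Along the point `a`, the
derivatives of `x = ℘(a)` and `y = ℘'(a)` are thus `yΓ` and `(6x² - g₂/2)Γ` up to algebraic terms,
where `Γ = a' + αζ(a) + βa`. Since `y² = 4x³ - g₂x - g₃` and `6x² - g₂/2` have no common zero, a
Bézout relation exhibits `Γ` as an algebraic function. Hence `1`, `a` and `ζ(a)` span a module
stable under differentiation over a finite extension of `ℂ(t)`, and any element of such a module
has linearly dependent derivatives over `ℂ(t)`.
-/

/-! ### Germs of functions off finite subsets of the unit interval -/

section Germs

/-- The filter of subsets of `(0,1)` with finite complement: statements about rational functions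
and linear differential equations are insensitive to finitely many exceptional points. -/
abbrev cofiniteIoo : Filter ℝ := cofinite ⊓ 𝓟 (Set.Ioo 0 1)

/-- Germs of functions on `(0,1)` up to finitely many points. -/
abbrev FunctionGerm : Type := Germ cofiniteIoo ℂ

lemma eventually_cofiniteIoo {p : ℝ → Prop} :
    (∀ᶠ t in cofiniteIoo, p t) ↔ {t | t ∈ Set.Ioo (0 : ℝ) 1 ∧ ¬ p t}.Finite := by
  rw [eventually_inf_principal, eventually_cofinite]
  simp only [Classical.not_imp]

lemma eventually_cofiniteIoo_of_forall {p : ℝ → Prop} (h : ∀ t ∈ Set.Ioo (0 : ℝ) 1, p t) :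
    ∀ᶠ t in cofiniteIoo, p t :=
  eventually_inf_principal.2 (Eventually.of_forall h)

lemma eventually_cofiniteIoo_eventually_nhds {p : ℝ → Prop} (h : ∀ᶠ t in cofiniteIoo, p t) :
    ∀ᶠ t in cofiniteIoo, ∀ᶠ s in 𝓝 t, p s := by
  have hfin := eventually_cofiniteIoo.1 h
  refine eventually_inf_principal.2 ?_
  filter_upwards [hfin.compl_mem_cofinite] with t ht htI
  filter_upwards [hfin.isClosed.isOpen_compl.mem_nhds ht, isOpen_Ioo.mem_nhds htI] with s hs hsI
  by_contra hp
  exact hs ⟨hsI, hp⟩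

/-- The germ of the function `t ↦ p(t)` of a polynomial `p`. -/
noncomputable def polynomialGerm : ℂ[X] →+* FunctionGerm :=
  (Germ.coeRingHom cofiniteIoo).comp (RingHom.pi fun t : ℝ => evalRingHom (t : ℂ))

lemma polynomialGerm_eq_coe (p : ℂ[X]) :
    polynomialGerm p = ((fun t : ℝ => p.eval (t : ℂ) : ℝ → ℂ) : FunctionGerm) := rfl

lemma eventually_eval_ne_zero {p : ℂ[X]} (hp : p ≠ 0) :
    ∀ᶠ t : ℝ in cofiniteIoo, p.eval (t : ℂ) ≠ 0 := by
  have hroots : {t : ℝ | p.eval (t : ℂ) = 0}.Finite :=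
    (finite_setOfPred_isRoot hp).preimage Complex.ofReal_injective.injOn
  exact eventually_cofiniteIoo.2 (hroots.subset fun t ht => not_not.1 ht.2)

lemma isUnit_germ {f : ℝ → ℂ} (h : ∀ᶠ t in cofiniteIoo, f t ≠ 0) :
    IsUnit (f : FunctionGerm) := by
  refine IsUnit.of_mul_eq_one ((f⁻¹ : ℝ → ℂ) : FunctionGerm) ?_
  rw [← Germ.coe_mul, ← Germ.coe_one, Germ.coe_eq]
  filter_upwards [h] with t ht using mul_inv_cancel₀ ht

lemma isUnit_polynomialGerm (p : nonZeroDivisors ℂ[X]) : IsUnit (polynomialGerm p) :=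
  isUnit_germ (eventually_eval_ne_zero (nonZeroDivisors.coe_ne_zero p))

noncomputable instance : Algebra (RatFunc ℂ) FunctionGerm :=
  (IsLocalization.lift (M := nonZeroDivisors ℂ[X]) isUnit_polynomialGerm).toAlgebra

lemma algebraMap_ratFunc_polynomial (p : ℂ[X]) :
    algebraMap (RatFunc ℂ) FunctionGerm (algebraMap ℂ[X] (RatFunc ℂ) p) = polynomialGerm p :=
  IsLocalization.lift_eq isUnit_polynomialGerm p

noncomputable instance : Algebra ℂ[X] FunctionGerm := polynomialGerm.toAlgebra

instance : IsScalarTower ℂ[X] (RatFunc ℂ) FunctionGerm :=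
  .of_algebraMap_eq fun p => (algebraMap_ratFunc_polynomial p).symm

instance : IsReduced FunctionGerm := by
  refine ⟨fun F => Quotient.inductionOn F ?_⟩
  rintro f ⟨n, hn⟩
  refine Germ.coe_eq.2 ?_
  filter_upwards [Germ.coe_eq.1 (show ((f ^ n : ℝ → ℂ) : FunctionGerm) = (0 : ℝ → ℂ) from hn)]
    with t ht using eq_zero_of_pow_eq_zero ht

end Germs

/-! ### Differentiation of germs -/

section GermDerivative

/-- `F'` is the germ of the derivative of a representative of `F`. -/
def HasGermDeriv (F F' : FunctionGerm) : Prop :=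
  ∃ f f' : ℝ → ℂ, F = (f : FunctionGerm) ∧ F' = (f' : FunctionGerm) ∧
    ∀ᶠ t in cofiniteIoo, HasDerivAt f (f' t) t

variable {F F' G G' : FunctionGerm}

lemma hasGermDeriv_coe {f f' : ℝ → ℂ} :
    HasGermDeriv f f' ↔ ∀ᶠ t in cofiniteIoo, HasDerivAt f (f' t) t := by
  refine ⟨fun ⟨g, g', hfg, hfg', hg⟩ => ?_, fun h => ⟨f, f', rfl, rfl, h⟩⟩
  filter_upwards [eventually_cofiniteIoo_eventually_nhds (Germ.coe_eq.1 hfg), Germ.coe_eq.1 hfg',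
    hg] with t ht ht' hgt
  exact (ht' ▸ hgt).congr_of_eventuallyEq ht

namespace HasGermDeriv

lemma unique (h : HasGermDeriv F F') (h' : HasGermDeriv F G') : F' = G' := by
  obtain ⟨f, f', rfl, rfl, hf⟩ := h
  induction G' using Germ.inductionOn with
  | _ g' =>
  refine Germ.coe_eq.2 ?_
  filter_upwards [hf, hasGermDeriv_coe.1 h'] with t hft hgt using hft.unique hgt

lemma add (hF : HasGermDeriv F F') (hG : HasGermDeriv G G') :
    HasGermDeriv (F + G) (F' + G') := by
  obtain ⟨f, f', rfl, rfl, hf⟩ := hF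
  obtain ⟨g, g', rfl, rfl, hg⟩ := hG
  refine ⟨f + g, f' + g', rfl, rfl, ?_⟩
  filter_upwards [hf, hg] with t hft hgt using hft.add hgt

lemma mul (hF : HasGermDeriv F F') (hG : HasGermDeriv G G') :
    HasGermDeriv (F * G) (F' * G + F * G') := by
  obtain ⟨f, f', rfl, rfl, hf⟩ := hF
  obtain ⟨g, g', rfl, rfl, hg⟩ := hG
  refine ⟨f * g, f' * g + f * g', rfl, rfl, ?_⟩
  filter_upwards [hf, hg] with t hft hgt using hft.mul hgt

lemma of_mul_eq_one (hF : HasGermDeriv F F') (hFG : F * G = 1) :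
    HasGermDeriv G (-(F' * G ^ 2)) := by
  obtain ⟨f, f', rfl, rfl, hf⟩ := hF
  induction G using Germ.inductionOn with
  | _ g =>
  have hfg : ∀ᶠ t in cofiniteIoo, f t * g t = 1 :=
    Germ.coe_eq.1 (show ((f * g : ℝ → ℂ) : FunctionGerm) = (1 : ℝ → ℂ) from hFG)
  refine ⟨g, -(f' * g ^ 2), rfl, rfl, ?_⟩
  filter_upwards [eventually_cofiniteIoo_eventually_nhds hfg, hf] with t ht hft
  have hginv : ∀ᶠ s in 𝓝 t, g s = (f s)⁻¹ := ht.mono fun s hs => eq_inv_of_mul_eq_one_right hs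
  refine ((hft.inv (left_ne_zero_of_mul_eq_one ht.self_of_nhds)).congr_of_eventuallyEq
    hginv).congr_deriv ?_
  simp [hginv.self_of_nhds, div_eq_mul_inv]

end HasGermDeriv

lemma hasGermDeriv_polynomial (p : ℂ[X]) :
    HasGermDeriv (polynomialGerm p) (polynomialGerm (derivative p)) :=
  hasGermDeriv_coe.2 (Eventually.of_forall fun t => (p.hasDerivAt (t : ℂ)).comp_ofReal)

lemma exists_hasGermDeriv_algebraMap (k : RatFunc ℂ) :
    ∃ k' : RatFunc ℂ, HasGermDeriv (algebraMap _ FunctionGerm k) (algebraMap _ _ k') := by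
  have hpoly (r : ℂ[X]) : HasGermDeriv (algebraMap (RatFunc ℂ) _ (algebraMap _ _ r))
      (algebraMap (RatFunc ℂ) _ (algebraMap _ _ (derivative r))) := by
    simpa only [algebraMap_ratFunc_polynomial] using hasGermDeriv_polynomial r
  obtain ⟨p, q, hq, rfl⟩ := IsFractionRing.div_surjective (A := ℂ[X]) k
  have hq₀ : algebraMap ℂ[X] (RatFunc ℂ) q ≠ 0 :=
    IsFractionRing.to_map_ne_zero_of_mem_nonZeroDivisors hq
  have hinv := (hpoly q).of_mul_eq_one (G := algebraMap _ _ (algebraMap ℂ[X] (RatFunc ℂ) q)⁻¹)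
    (by rw [← map_mul, mul_inv_cancel₀ hq₀, map_one])
  have hdiv := (hpoly p).mul hinv
  simp only [← map_mul, ← map_add, ← map_pow, ← map_neg] at hdiv
  exact ⟨_, div_eq_mul_inv (algebraMap ℂ[X] (RatFunc ℂ) p) _ ▸ hdiv⟩

lemma exists_hasGermDeriv_aeval (h : HasGermDeriv F F') (p : (RatFunc ℂ)[X]) :
    ∃ E ∈ Algebra.adjoin (RatFunc ℂ) {F},
      HasGermDeriv (aeval F p) (E + aeval F (derivative p) * F') := by
  induction p using Polynomial.induction_on' with
  | add p q hp hq =>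
    obtain ⟨E₁, hE₁, hp⟩ := hp
    obtain ⟨E₂, hE₂, hq⟩ := hq
    refine ⟨E₁ + E₂, add_mem hE₁ hE₂, ?_⟩
    convert hp.add hq using 1 <;> simp only [map_add]
    ring
  | monomial n k =>
    induction n with
    | zero =>
      obtain ⟨k', hk'⟩ := exists_hasGermDeriv_algebraMap k
      exact ⟨algebraMap _ _ k', Subalgebra.algebraMap_mem _ _, by simpa using hk'⟩
    | succ n ih =>
      obtain ⟨E, hE, hn⟩ := ih
      refine ⟨E * F, mul_mem hE (Algebra.self_mem_adjoin_singleton _ F), ?_⟩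
      rw [← monomial_mul_X]
      convert hn.mul h using 1 <;>
        simp only [derivative_mul, derivative_X, map_mul, map_add, aeval_X, map_one]
      ring

lemma separable_minpoly_of_isReduced {K A : Type*} [Field K] [PerfectField K] [CommRing A]
    [Algebra K A] [IsReduced A] {x : A} (hx : IsIntegral K x) : (minpoly K x).Separable :=
  PerfectField.separable_iff_squarefree.2 ((minpoly.isRadical K x).squarefree (minpoly.ne_zero hx))

-- Differentiating `m(F) = 0`, where `m` is the minimal polynomial, expresses `m'(F) F'` through
-- `F`; separability makes `m'(F)` invertible.
lemma HasGermDeriv.mem_adjoin (hF : IsIntegral (RatFunc ℂ) F) (h : HasGermDeriv F F') :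
    F' ∈ Algebra.adjoin (RatFunc ℂ) {F} := by
  obtain ⟨u, v, huv⟩ := separable_minpoly_of_isReduced hF
  obtain ⟨E, hE, hm⟩ := exists_hasGermDeriv_aeval h (minpoly (RatFunc ℂ) F)
  have hzero : HasGermDeriv 0 0 := by simpa using hasGermDeriv_polynomial 0
  rw [minpoly.aeval] at hm
  have hm₀ := hm.unique hzero
  have huvF := congrArg (aeval F) huv
  simp only [map_add, map_mul, minpoly.aeval, mul_zero, zero_add, map_one] at huvF
  have hF' : F' = -(aeval F v * E) := by
    linear_combination (-F') * huvF + aeval F v * hm₀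
  exact hF' ▸ neg_mem (mul_mem (aeval_mem_adjoin_singleton _ _) hE)

/-- The algebra of germs that are algebraic over `ℂ(t)` and differentiable. -/
def algebraicGerms : Subalgebra (RatFunc ℂ) FunctionGerm where
  carrier := {F | IsIntegral (RatFunc ℂ) F ∧ ∃ F', HasGermDeriv F F'}
  mul_mem' := fun ⟨hF, _, hF'⟩ ⟨hG, _, hG'⟩ => ⟨hF.mul hG, _, hF'.mul hG'⟩
  add_mem' := fun ⟨hF, _, hF'⟩ ⟨hG, _, hG'⟩ => ⟨hF.add hG, _, hF'.add hG'⟩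
  algebraMap_mem' k :=
    let ⟨_, hk'⟩ := exists_hasGermDeriv_algebraMap k
    ⟨isIntegral_algebraMap, _, hk'⟩

lemma exists_hasGermDeriv_mem_adjoin {S : Set FunctionGerm} (hS : S ⊆ algebraicGerms)
    (hF : F ∈ Algebra.adjoin (RatFunc ℂ) S) :
    ∃ F' ∈ Algebra.adjoin (RatFunc ℂ) S, HasGermDeriv F F' := by
  induction hF using Algebra.adjoin_induction with
  | mem F hF =>
    obtain ⟨hint, F', hF'⟩ := hS hF
    exact ⟨F', Algebra.adjoin_mono (Set.singleton_subset_iff.2 hF) (hF'.mem_adjoin hint), hF'⟩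
  | algebraMap k =>
    obtain ⟨k', hk'⟩ := exists_hasGermDeriv_algebraMap k
    exact ⟨_, Subalgebra.algebraMap_mem _ _, hk'⟩
  | add F G _ _ hF hG =>
    obtain ⟨F', hF', hF⟩ := hF
    obtain ⟨G', hG', hG⟩ := hG
    exact ⟨_, add_mem hF' hG', hF.add hG⟩
  | mul F G hFS hGS hF hG =>
    obtain ⟨F', hF', hF⟩ := hF
    obtain ⟨G', hG', hG⟩ := hG
    exact ⟨_, add_mem (mul_mem hF' hGS) (mul_mem hFS hG'), hF.mul hG⟩

lemma HasGermDeriv.mem_algebraicGerms (hF : F ∈ algebraicGerms) (h : HasGermDeriv F F') :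
    F' ∈ algebraicGerms :=
  Algebra.adjoin_le (Set.singleton_subset_iff.2 hF) (h.mem_adjoin hF.1)

end GermDerivative

/-! ### Algebraic functions -/

section AlgebraicFunctions

/-- Functions whose germ is algebraic over `ℂ(t)` and that are differentiable on `(0,1)` off a
finite set. -/
def algebraicFunctions : Subalgebra ℂ (ℝ → ℂ) where
  toSubsemiring := algebraicGerms.toSubsemiring.comap (Germ.coeRingHom cofiniteIoo)
  algebraMap_mem' c := by
    have hconst : Germ.coeRingHom cofiniteIoo (algebraMap ℂ (ℝ → ℂ) c) =
        algebraMap (RatFunc ℂ) _ (algebraMap ℂ[X] _ (C c)) := by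
      rw [algebraMap_ratFunc_polynomial, polynomialGerm_eq_coe]
      simp only [eval_C]
      rfl
    change Germ.coeRingHom cofiniteIoo _ ∈ algebraicGerms
    exact hconst ▸ algebraicGerms.algebraMap_mem _

variable {f : ℝ → ℂ}

lemma mem_algebraicFunctions_of_isIntegral (hint : IsIntegral (RatFunc ℂ) (f : FunctionGerm))
    (hf : DifferentiableOn ℝ f (Set.Ioo 0 1)) : f ∈ algebraicFunctions :=
  ⟨hint, (deriv f : ℝ → ℂ), hasGermDeriv_coe.2 (eventually_cofiniteIoo_of_forall fun _ ht =>
    (hf.differentiableAt (isOpen_Ioo.mem_nhds ht)).hasDerivAt)⟩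

lemma deriv_mem_algebraicFunctions (hf : f ∈ algebraicFunctions) :
    deriv f ∈ algebraicFunctions := by
  obtain ⟨F', hF'⟩ := hf.2
  refine HasGermDeriv.mem_algebraicGerms hf (hasGermDeriv_coe.2 ?_)
  induction F' using Germ.inductionOn with
  | _ f' =>
  filter_upwards [hasGermDeriv_coe.1 hF'] with t ht
  exact ht.differentiableAt.hasDerivAt

lemma inv_mem_algebraicFunctions (hf : f ∈ algebraicFunctions)
    (h₀ : ∀ t ∈ Set.Ioo (0 : ℝ) 1, f t ≠ 0) : f⁻¹ ∈ algebraicFunctions := by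
  obtain ⟨F', hF'⟩ := hf.2
  have hmul : (f : FunctionGerm) * ((f⁻¹ : ℝ → ℂ) : FunctionGerm) = 1 :=
    Germ.coe_eq.2 (eventually_cofiniteIoo_of_forall fun t ht => mul_inv_cancel₀ (h₀ t ht))
  let : Invertible (f : FunctionGerm) := invertibleOfRightInverse _ _ hmul
  have halg : IsAlgebraic (RatFunc ℂ) (f : FunctionGerm) := isAlgebraic_iff_isIntegral.2 hf.1
  exact ⟨isAlgebraic_iff_isIntegral.1 halg.invOf, _, hF'.of_mul_eq_one hmul⟩

lemma mem_algebraicFunctions_of_sq {g : ℝ → ℂ} (hf : DifferentiableOn ℝ f (Set.Ioo 0 1))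
    (hg : g ∈ algebraicFunctions) (hsq : ∀ t ∈ Set.Ioo (0 : ℝ) 1, f t ^ 2 = g t) :
    f ∈ algebraicFunctions := by
  refine mem_algebraicFunctions_of_isIntegral (IsIntegral.of_pow two_pos ?_) hf
  have hgerm : (f : FunctionGerm) ^ 2 = (g : FunctionGerm) :=
    Germ.coe_eq.2 (eventually_cofiniteIoo_of_forall hsq)
  rw [hgerm]
  exact hg.1

/-- Polynomials in `T = X 0` and `Z = X 1` as polynomials in `Z` over `ℂ[T]`. -/
noncomputable def bivariateToPolynomial : MvPolynomial (Fin 2) ℂ →ₐ[ℂ] ℂ[X][X] :=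
  MvPolynomial.aeval ![C X, X]

lemma bivariateToPolynomial_injective : Function.Injective bivariateToPolynomial := by
  let inverse : ℂ[X][X] →+* MvPolynomial (Fin 2) ℂ :=
    eval₂RingHom (eval₂RingHom MvPolynomial.C (MvPolynomial.X 0)) (MvPolynomial.X 1)
  have hinv : inverse.comp bivariateToPolynomial.toRingHom = RingHom.id _ := by
    refine MvPolynomial.ringHom_ext (fun c => ?_) fun i => ?_
    · simp [inverse, bivariateToPolynomial, Polynomial.algebraMap_apply]
    · fin_cases i <;> simp [inverse, bivariateToPolynomial]
  exact Function.LeftInverse.injective (g := inverse) (DFunLike.congr_fun hinv)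

lemma eval₂_bivariateToPolynomial (c : ℝ → ℂ) (P : MvPolynomial (Fin 2) ℂ) :
    eval₂ polynomialGerm (c : FunctionGerm) (bivariateToPolynomial P) =
      ((fun t => MvPolynomial.eval ![(t : ℂ), c t] P : ℝ → ℂ) : FunctionGerm) := by
  have hhom : (eval₂RingHom polynomialGerm (c : FunctionGerm)).comp
        bivariateToPolynomial.toRingHom =
      (Germ.coeRingHom cofiniteIoo).comp
        (RingHom.pi fun t : ℝ => MvPolynomial.eval ![(t : ℂ), c t]) := by
    refine MvPolynomial.ringHom_ext (fun z => ?_) fun i => ?_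
    · change eval₂ polynomialGerm (c : FunctionGerm) (bivariateToPolynomial _) =
        ((fun t => MvPolynomial.eval ![(t : ℂ), c t] (MvPolynomial.C z) : ℝ → ℂ) : FunctionGerm)
      simp [bivariateToPolynomial, Polynomial.algebraMap_apply, polynomialGerm_eq_coe]
    · change eval₂ polynomialGerm (c : FunctionGerm) (bivariateToPolynomial _) =
        ((fun t => MvPolynomial.eval ![(t : ℂ), c t] (MvPolynomial.X i) : ℝ → ℂ) : FunctionGerm)
      fin_cases i <;> simp [bivariateToPolynomial, polynomialGerm_eq_coe]
  exact DFunLike.congr_fun hhom P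

lemma AlgebraicOverCt.isIntegral {c : ℝ → ℂ} (h : AlgebraicOverCt c) :
    IsIntegral (RatFunc ℂ) (c : FunctionGerm) := by
  obtain ⟨P, hP, hPc⟩ := h
  refine isAlgebraic_iff_isIntegral.1
    ⟨(bivariateToPolynomial P).map (algebraMap ℂ[X] (RatFunc ℂ)), ?_, ?_⟩
  · rw [Ne, Polynomial.map_eq_zero_iff (IsFractionRing.injective ℂ[X] (RatFunc ℂ))]
    exact (map_ne_zero_iff _ bivariateToPolynomial_injective).2 hP
  · have hcomp : (algebraMap (RatFunc ℂ) FunctionGerm).comp (algebraMap ℂ[X] _) = polynomialGerm :=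
      RingHom.ext algebraMap_ratFunc_polynomial
    rw [aeval_def, eval₂_map, hcomp, eval₂_bivariateToPolynomial]
    exact Germ.coe_eq.2 (eventually_cofiniteIoo_of_forall hPc)

end AlgebraicFunctions

/-! ### D-finiteness -/

section DFinite

variable {f : ℝ → ℂ}

lemma dFiniteT_of_eventually {m : ℕ} {c : Fin (m + 1) → ℂ[X]} (hc : ∃ i, c i ≠ 0)
    (h : ∀ᶠ t : ℝ in cofiniteIoo, ∑ i, (c i).eval (t : ℂ) * iteratedDeriv i f t = 0) :
    DFiniteT f := by
  have hfin := eventually_cofiniteIoo.1 h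
  set r : ℂ[X] := ∏ t ∈ hfin.toFinset, (X - C (t : ℂ)) with hr
  have hr₀ : r ≠ 0 := Finset.prod_ne_zero_iff.2 fun t _ => X_sub_C_ne_zero _
  refine ⟨m, fun i => r * c i, hc.imp fun i hi => mul_ne_zero hr₀ hi, fun t ht => ?_⟩
  simp only [eval_mul, mul_assoc, ← Finset.mul_sum, mul_eq_zero]
  refine or_iff_not_imp_right.2 fun hsum => ?_
  rw [hr, eval_prod]
  exact Finset.prod_eq_zero (hfin.mem_toFinset.2 ⟨ht, hsum⟩) (by simp)

lemma iteratedDeriv_germ_mem {W : Set FunctionGerm}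
    (hW : ∀ F ∈ W, ∃ F' ∈ W, HasGermDeriv F F') (hf : (f : FunctionGerm) ∈ W) (k : ℕ) :
    ((iteratedDeriv k f : ℝ → ℂ) : FunctionGerm) ∈ W := by
  induction k with
  | zero => simpa using hf
  | succ k ih =>
    obtain ⟨F', hF'W, hF'⟩ := hW _ ih
    induction F' using Germ.inductionOn with
    | _ g =>
    suffices (iteratedDeriv (k + 1) f : FunctionGerm) = g from this ▸ hF'W
    refine Germ.coe_eq.2 ?_
    filter_upwards [hasGermDeriv_coe.1 hF'] with t ht
    rw [iteratedDeriv_succ, ht.deriv]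

lemma germ_sum_polynomial_smul {ι : Type*} [Fintype ι] (c : ι → ℂ[X]) (g : ι → ℝ → ℂ) :
    ∑ i, c i • (g i : FunctionGerm) =
      ((fun t : ℝ => ∑ i, (c i).eval (t : ℂ) * g i t : ℝ → ℂ) : FunctionGerm) := by
  have hsum : (fun t : ℝ => ∑ i, (c i).eval (t : ℂ) * g i t) =
      ∑ i, (fun t : ℝ => (c i).eval (t : ℂ)) * g i := by
    ext t
    simp
  rw [hsum]
  exact (map_sum (Germ.coeRingHom cofiniteIoo) _ _).symm

lemma dFiniteT_of_mem_finite_submodule (W : Submodule (RatFunc ℂ) FunctionGerm)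
    [Module.Finite (RatFunc ℂ) W] (hW : ∀ F ∈ W, ∃ F' ∈ W, HasGermDeriv F F')
    (hf : (f : FunctionGerm) ∈ W) : DFiniteT f := by
  let D : Fin (Module.finrank (RatFunc ℂ) W + 1) → W := fun i =>
    ⟨(iteratedDeriv i f : ℝ → ℂ), iteratedDeriv_germ_mem (W := W) hW hf i⟩
  have hdep : ¬ LinearIndependent (RatFunc ℂ) D := fun hD => by
    simpa using hD.fintype_card_le_finrank
  rw [← LinearIndependent.iff_fractionRing ℂ[X], Fintype.not_linearIndependent_iff] at hdep
  obtain ⟨c, hc, hc₀⟩ := hdep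
  have hgerm : ∑ i, c i • ((iteratedDeriv i f : ℝ → ℂ) : FunctionGerm) = 0 := by
    simpa [D] using congrArg (Subtype.val : W → FunctionGerm) hc
  rw [germ_sum_polynomial_smul] at hgerm
  exact dFiniteT_of_eventually hc₀ (Germ.coe_eq.1 hgerm)

lemma exists_hasGermDeriv_mem_span {A : Subalgebra (RatFunc ℂ) FunctionGerm}
    (hA : ∀ F ∈ A, ∃ F' ∈ A, HasGermDeriv F F') {s : Set FunctionGerm}
    (hs : ∀ F ∈ s, ∃ F' ∈ Submodule.span A s, HasGermDeriv F F') {F : FunctionGerm}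
    (hF : F ∈ Submodule.span A s) : ∃ F' ∈ Submodule.span A s, HasGermDeriv F F' := by
  induction hF using Submodule.span_induction with
  | mem F hF => exact hs F hF
  | zero => exact ⟨0, zero_mem _, by simpa using hasGermDeriv_polynomial 0⟩
  | add F G _ _ hF hG =>
    obtain ⟨F', hF', hF⟩ := hF
    obtain ⟨G', hG', hG⟩ := hG
    exact ⟨_, add_mem hF' hG', hF.add hG⟩
  | smul u F hFs hF =>
    obtain ⟨F', hF', hF⟩ := hF
    obtain ⟨u', hu', hu⟩ := hA u u.2
    exact ⟨_, add_mem (Submodule.smul_mem _ (⟨u', hu'⟩ : A) hFs) (Submodule.smul_mem _ u hF'),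
      hu.mul hF⟩

lemma dFiniteT_of_mem_span (A : Subalgebra (RatFunc ℂ) FunctionGerm) [Module.Finite (RatFunc ℂ) A]
    (hA : ∀ F ∈ A, ∃ F' ∈ A, HasGermDeriv F F') {s : Set FunctionGerm} (hfin : s.Finite)
    (hs : ∀ F ∈ s, ∃ F' ∈ Submodule.span A s, HasGermDeriv F F')
    (hf : (f : FunctionGerm) ∈ Submodule.span A s) : DFiniteT f := by
  have : Module.Finite A (Submodule.span A s) := Module.Finite.span_of_finite A hfin
  have hfinite : Module.Finite (RatFunc ℂ) (Submodule.span A s) := Module.Finite.trans A _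
  let W := (Submodule.span A s).restrictScalars (RatFunc ℂ)
  have : Module.Finite (RatFunc ℂ) W := hfinite
  exact dFiniteT_of_mem_finite_submodule W (fun F hF => exists_hasGermDeriv_mem_span hA hs hF) hf

lemma dFiniteT_of_linear_system {ι : Type*} [Fintype ι] {M : ι → ι → ℝ → ℂ} {y : ι → ℝ → ℂ}
    (hM : ∀ i j, M i j ∈ algebraicFunctions)
    (hy : ∀ i, ∀ t ∈ Set.Ioo (0 : ℝ) 1, HasDerivAt (y i) (∑ j, M i j t * y j t) t) (i : ι) :
    DFiniteT (y i) := by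
  let S : Set FunctionGerm := Set.range fun p : ι × ι => (M p.1 p.2 : FunctionGerm)
  have hS : S ⊆ algebraicGerms := Set.range_subset_iff.2 fun p => hM p.1 p.2
  let A := Algebra.adjoin (RatFunc ℂ) S
  have : Module.Finite (RatFunc ℂ) A :=
    Module.Finite.iff_fg.2 (fg_adjoin_of_finite (Set.finite_range _) fun F hF => (hS hF).1)
  have hmem (j : ι) : (y j : FunctionGerm) ∈
      Submodule.span A (Set.range fun k => (y k : FunctionGerm)) := Submodule.subset_span ⟨j, rfl⟩
  refine dFiniteT_of_mem_span A (fun F hF => exists_hasGermDeriv_mem_adjoin hS hF)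
    (Set.finite_range _) (Set.forall_mem_range.2 fun j => ⟨_, ?_,
      hasGermDeriv_coe.2 (eventually_cofiniteIoo_of_forall (hy j))⟩) (hmem i)
  have hsum : ((fun t => ∑ k, M j k t * y k t : ℝ → ℂ) : FunctionGerm) =
      ∑ k, (⟨M j k, Algebra.subset_adjoin ⟨(j, k), rfl⟩⟩ : A) • (y k : FunctionGerm) := by
    rw [show (fun t => ∑ k, M j k t * y k t) = ∑ k, M j k * y k by ext t; simp]
    exact map_sum (Germ.coeRingHom cofiniteIoo) _ _
  exact hsum ▸ sum_mem fun k _ => Submodule.smul_mem _ _ (hmem k)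

end DFinite

/-! ### The Weierstrass function of a fixed lattice -/

section FixedPeriods

open PeriodPair

lemma isPreconnected_compl_of_countable {s : Set ℂ} (hs : s.Countable) : IsPreconnected sᶜ :=
  (hs.isPathConnected_compl_of_one_lt_rank (by simp)).isConnected.isPreconnected

lemma exists_eq_mul_of_wronskian_eq_zero {U : Set ℂ} (hU : IsOpen U) (hUc : IsPreconnected U)
    {f f' g g' : ℂ → ℂ} (hf : ∀ z ∈ U, HasDerivAt f (f' z) z)
    (hg : ∀ z ∈ U, HasDerivAt g (g' z) z) (hW : ∀ z ∈ U, f' z * g z = f z * g' z)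
    (hg₀ : ∃ z ∈ U, g z ≠ 0) : ∃ c : ℂ, ∀ z ∈ U, f z = c * g z := by
  obtain ⟨z₀, hz₀, hgz₀⟩ := hg₀
  have analytic {h h' : ℂ → ℂ} (hh : ∀ z ∈ U, HasDerivAt h (h' z) z) : AnalyticOnNhd ℂ h U :=
    DifferentiableOn.analyticOnNhd
      (fun z hz => (hh z hz).differentiableAt.differentiableWithinAt) hU
  obtain ⟨ε, hε, hball⟩ := Metric.eventually_nhds_iff_ball.1
    ((hU.eventually_mem hz₀).and ((hg z₀ hz₀).continuousAt.eventually_ne hgz₀))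
  have hquot : ∀ z ∈ Metric.ball z₀ ε, HasDerivAt (fun z => f z / g z) 0 z := fun z hz => by
    obtain ⟨hzU, hgz⟩ := hball z hz
    simpa [hW z hzU] using (hf z hzU).fun_div (hg z hzU) hgz
  have hconst : ∀ z ∈ Metric.ball z₀ ε, f z / g z = f z₀ / g z₀ := fun z hz =>
    Metric.isOpen_ball.is_const_of_deriv_eq_zero (𝕜 := ℂ) (convex_ball z₀ ε).isPreconnected
      (fun z hz => (hquot z hz).differentiableAt.differentiableWithinAt)
      (fun z hz => (hquot z hz).deriv) hz (Metric.mem_ball_self hε)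
  refine ⟨f z₀ / g z₀, (analytic hf).eqOn_of_preconnected_of_eventuallyEq
    (analytic fun z hz => (hg z hz).const_mul _) hUc hz₀ ?_⟩
  filter_upwards [Metric.ball_mem_nhds z₀ hε] with z hz
  rw [← hconst z hz, div_mul_cancel₀ _ (hball z hz).2]

-- If `D` had a zero of finite order `n` at `z₀`, then `D''` would have order `n - 2 < n`.
lemma eventuallyEq_zero_of_deriv_deriv_eq_mul {D Q : ℂ → ℂ} {z₀ : ℂ} (hD : AnalyticAt ℂ D z₀)
    (hQ : AnalyticAt ℂ Q z₀) (hode : deriv (deriv D) =ᶠ[𝓝 z₀] Q * D) (h₀ : D z₀ = 0)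
    (h₁ : deriv D z₀ = 0) : D =ᶠ[𝓝 z₀] 0 := by
  have horder : analyticOrderAt (deriv D) z₀ + 1 = analyticOrderAt D z₀ := by
    simpa [h₀] using hD.analyticOrderAt_deriv_add_one
  have horder' : analyticOrderAt (deriv (deriv D)) z₀ + 1 = analyticOrderAt (deriv D) z₀ := by
    simpa [h₁] using hD.deriv.analyticOrderAt_deriv_add_one
  rw [analyticOrderAt_congr hode, analyticOrderAt_mul hQ hD] at horder'
  refine analyticOrderAt_eq_top.1 (by_contra fun hfinite => ?_)
  lift analyticOrderAt D z₀ to ℕ using hfinite with n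
  cases hq : analyticOrderAt Q z₀ <;> simp only [hq, top_add] at horder'
  · simp [← horder'] at horder
  · rw [← horder'] at horder
    norm_cast at horder
    omega

variable (L : PeriodPair)

lemma countable_lattice : (L.lattice : Set ℂ).Countable :=
  Set.countable_coe_iff.1 (L.latticeEquivProd.toEquiv.countable_iff.2 inferInstance)

lemma isPreconnected_compl_lattice : IsPreconnected (L.lattice : Set ℂ)ᶜ :=
  isPreconnected_compl_of_countable (countable_lattice L)

lemma eventually_notMem_lattice (z₀ : ℂ) : ∀ᶠ z in 𝓝[≠] z₀, z ∉ L.lattice := by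
  filter_upwards [nhdsWithin_le_nhds (L.compl_lattice_sdiff_singleton_mem_nhds z₀),
    self_mem_nhdsWithin] with z hz hne hmem using hz ⟨hmem, hne⟩

variable {L} in
lemma hasDerivAt_weierstrassP {z : ℂ} (hz : z ∉ L.lattice) : HasDerivAt ℘[L] (℘'[L] z) z := by
  rw [← L.deriv_weierstrassP]
  exact (L.analyticOnNhd_weierstrassP z hz).differentiableAt.hasDerivAt

lemma tendsto_weierstrassP_cobounded : Tendsto ℘[L] (𝓝[≠] 0) (Bornology.cobounded ℂ) :=
  (tendsto_cobounded_iff_meromorphicOrderAt_neg (L.meromorphic_weierstrassP 0)).2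
    (by rw [L.order_weierstrassP 0 (zero_mem _)]; decide)

lemma exists_derivWeierstrassP_ne_zero : ∃ z ∈ (L.lattice : Set ℂ)ᶜ, ℘'[L] z ≠ 0 := by
  by_contra! h
  have hconst : ∀ z ∉ L.lattice, ℘[L] z = ℘[L] (L.ω₁ / 2) := fun z hz =>
    L.isClosed_lattice.isOpen_compl.is_const_of_deriv_eq_zero (isPreconnected_compl_lattice L)
      (fun z hz => (hasDerivAt_weierstrassP hz).differentiableAt.differentiableWithinAt)
      (fun z hz => by rw [L.deriv_weierstrassP]; exact h z hz) hz L.ω₁_div_two_notMem_lattice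
  have htend :=
    (tendsto_weierstrassP_cobounded L).congr' ((eventually_notMem_lattice L 0).mono hconst)
  rw [← tendsto_norm_atTop_iff_cobounded] at htend
  exact not_tendsto_const_atTop _ _ htend

variable {L} in
lemma derivWeierstrassP_mul_deriv_derivWeierstrassP {z : ℂ} (hz : z ∉ L.lattice) :
    ℘'[L] z * (deriv ℘'[L] z - (6 * ℘[L] z ^ 2 - L.g₂ / 2)) = 0 := by
  have hP := hasDerivAt_weierstrassP hz
  have hP' := (L.analyticOnNhd_derivWeierstrassP z hz).differentiableAt.hasDerivAt
  have hcubic : HasDerivAt (fun z => ℘'[L] z ^ 2)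
      (4 * (3 * ℘[L] z ^ 2 * ℘'[L] z) - L.g₂ * ℘'[L] z) z := by
    refine HasDerivAt.congr_of_eventuallyEq (f := fun z => 4 * ℘[L] z ^ 3 - L.g₂ * ℘[L] z - L.g₃)
      ?_ ?_
    · simpa using (((hP.fun_pow 3).const_mul 4).sub (hP.const_mul L.g₂)).sub_const L.g₃
    · filter_upwards [L.isClosed_lattice.isOpen_compl.mem_nhds hz] with z hz
      exact L.derivWeierstrassP_sq z hz
  have hsq : HasDerivAt (fun z => ℘'[L] z ^ 2) (2 * ℘'[L] z * deriv ℘'[L] z) z := by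
    simpa using hP'.fun_pow 2
  linear_combination (1 / 2 : ℂ) * hsq.unique hcubic

variable {L} in
lemma hasDerivAt_derivWeierstrassP {z : ℂ} (hz : z ∉ L.lattice) :
    HasDerivAt ℘'[L] (6 * ℘[L] z ^ 2 - L.g₂ / 2) z := by
  have hP := L.analyticOnNhd_weierstrassP
  have hP' := L.analyticOnNhd_derivWeierstrassP
  rcases hP'.eq_zero_or_eq_zero_of_mul_eq_zero
    (hP'.deriv.sub ((analyticOnNhd_const.mul (hP.pow 2)).sub analyticOnNhd_const))
    (fun z hz => derivWeierstrassP_mul_deriv_derivWeierstrassP hz)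
    (isPreconnected_compl_lattice L) with h | h
  · obtain ⟨w, hw, hne⟩ := exists_derivWeierstrassP_ne_zero L
    exact absurd (h w hw) hne
  · have hderiv : deriv ℘'[L] z = 6 * ℘[L] z ^ 2 - L.g₂ / 2 := sub_eq_zero.1 (h z hz)
    exact hderiv ▸ (hP' z hz).differentiableAt.hasDerivAt

variable {L}

-- Both sides solve the second order equation `℘'' = 6 ℘² - g₂ / 2` with the same initial data.
lemma eventuallyEq_weierstrassP_add {z d : ℂ} (hz : z ∉ L.lattice) (hzd : z + d ∉ L.lattice)
    (hP : ℘[L] z = ℘[L] (z + d)) (hP' : ℘'[L] z = ℘'[L] (z + d)) :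
    ℘[L] =ᶠ[𝓝 z] fun w => ℘[L] (w + d) := by
  have hzd' : ∀ᶠ w in 𝓝 z, w + d ∉ L.lattice :=
    (continuous_add_const d).continuousAt.eventually_mem
      (L.isClosed_lattice.isOpen_compl.mem_nhds hzd)
  have hgood : ∀ᶠ w in 𝓝 z, w ∉ L.lattice ∧ w + d ∉ L.lattice :=
    (L.isClosed_lattice.isOpen_compl.eventually_mem hz).and hzd'
  have hshift : AnalyticAt ℂ (fun w => ℘[L] (w + d)) z :=
    (L.analyticOnNhd_weierstrassP _ hzd).comp (f := fun w => w + d) (by fun_prop)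
  have hsame := L.analyticOnNhd_weierstrassP z hz
  have hderiv : deriv (fun w => ℘[L] w - ℘[L] (w + d)) =ᶠ[𝓝 z]
      fun w => ℘'[L] w - ℘'[L] (w + d) := hgood.mono fun w hw =>
    ((hasDerivAt_weierstrassP hw.1).sub ((hasDerivAt_weierstrassP hw.2).comp_add_const w d)).deriv
  refine (eventuallyEq_zero_of_deriv_deriv_eq_mul (hsame.sub hshift)
    ((analyticAt_const (v := (6 : ℂ))).mul (hsame.add hshift)) (hderiv.deriv.trans ?_)
    (sub_eq_zero.2 hP) (hderiv.self_of_nhds.trans (sub_eq_zero.2 hP'))).mono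
      fun w hw => sub_eq_zero.1 hw
  filter_upwards [hgood] with w hw
  rw [((hasDerivAt_derivWeierstrassP hw.1).fun_sub
    ((hasDerivAt_derivWeierstrassP hw.2).comp_add_const w d)).deriv]
  simp only [Pi.mul_apply, Pi.add_apply, Pi.sub_apply]
  ring

lemma mem_lattice_of_weierstrassP_eq {z d : ℂ} (hz : z ∉ L.lattice) (hzd : z + d ∉ L.lattice)
    (hP : ℘[L] z = ℘[L] (z + d)) (hP' : ℘'[L] z = ℘'[L] (z + d)) : d ∈ L.lattice := by
  by_contra hd
  have hcont : Continuous fun w : ℂ => w + d := continuous_add_const d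
  have hopen := L.isClosed_lattice.isOpen_compl
  let U : Set ℂ := ((L.lattice : Set ℂ) ∪ (fun w => w + d) ⁻¹' L.lattice)ᶜ
  have hmem {w : ℂ} (hw : w ∈ U) : w ∉ L.lattice ∧ w + d ∉ L.lattice := not_or.1 hw
  have heqOn : Set.EqOn ℘[L] (fun w => ℘[L] (w + d)) U := by
    refine AnalyticOnNhd.eqOn_of_preconnected_of_eventuallyEq (z₀ := z)
      (fun w hw => L.analyticOnNhd_weierstrassP w (hmem hw).1)
      (fun w hw => (L.analyticOnNhd_weierstrassP _ (hmem hw).2).comp (f := fun w => w + d)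
        (by fun_prop))
      (isPreconnected_compl_of_countable ((countable_lattice L).union
        ((countable_lattice L).preimage (add_left_injective d))))
      (not_or.2 ⟨hz, hzd⟩) (eventuallyEq_weierstrassP_add hz hzd hP hP')
  have hd₀ : ∀ᶠ w in 𝓝[≠] (0 : ℂ), w + d ∉ L.lattice :=
    nhdsWithin_le_nhds (hcont.continuousAt.eventually_mem (hopen.mem_nhds (by simpa using hd)))
  have hpole : Tendsto (fun w => ℘[L] (w + d)) (𝓝[≠] 0) (Bornology.cobounded ℂ) :=
    (tendsto_weierstrassP_cobounded L).congr' (((eventually_notMem_lattice L 0).and hd₀).mono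
      fun w hw => heqOn (not_or.2 hw))
  have hderiv := (hasDerivAt_weierstrassP (z := 0 + d) (by simpa using hd)).comp_add_const 0 d
  have hfinite : Tendsto (fun w => ℘[L] (w + d)) (𝓝[≠] 0) (𝓝 (℘[L] (0 + d))) :=
    hderiv.continuousAt.tendsto.mono_left nhdsWithin_le_nhds
  exact hpole.not_tendsto (Metric.disjoint_cobounded_nhds _) hfinite

lemma derivWeierstrassP_eq_zero_of_two_mul_mem {h : ℂ} (h2 : 2 * h ∈ L.lattice) :
    ℘'[L] h = 0 := by
  have hper := L.derivWeierstrassP_sub_coe h ⟨2 * h, h2⟩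
  rw [show h - 2 * h = -h by ring, L.derivWeierstrassP_neg] at hper
  exact CharZero.neg_eq_self_iff.1 hper

lemma weierstrassP_ne_of_two_mul_mem {h k : ℂ} (hh : h ∉ L.lattice) (hk : k ∉ L.lattice)
    (h2 : 2 * h ∈ L.lattice) (k2 : 2 * k ∈ L.lattice) (hhk : k - h ∉ L.lattice) :
    ℘[L] h ≠ ℘[L] k := by
  have hadd : h + (k - h) = k := add_sub_cancel h k
  refine fun heq => hhk (mem_lattice_of_weierstrassP_eq hh (hadd.symm ▸ hk) (hadd.symm ▸ heq) ?_)
  rw [hadd, derivWeierstrassP_eq_zero_of_two_mul_mem h2,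
    derivWeierstrassP_eq_zero_of_two_mul_mem k2]

lemma cubic_discriminant_ne_zero {K : Type*} [Field K] [CharZero K] {g₂ g₃ x y z : K}
    (hx : 4 * x ^ 3 - g₂ * x - g₃ = 0) (hy : 4 * y ^ 3 - g₂ * y - g₃ = 0)
    (hz : 4 * z ^ 3 - g₂ * z - g₃ = 0) (hxy : x ≠ y) (hyz : y ≠ z) (hxz : x ≠ z) :
    g₂ ^ 3 - 27 * g₃ ^ 2 ≠ 0 := by
  have hg₂ : g₂ = 4 * (x ^ 2 + x * y + y ^ 2) :=
    mul_left_cancel₀ (sub_ne_zero.2 hxy) (by linear_combination hy - hx)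
  have hg₂' : g₂ = 4 * (x ^ 2 + x * z + z ^ 2) :=
    mul_left_cancel₀ (sub_ne_zero.2 hxz) (by linear_combination hz - hx)
  have hsum : z = -x - y :=
    mul_left_cancel₀ (sub_ne_zero.2 hyz) (by linear_combination (1 / 4 : K) * (hg₂' - hg₂))
  have hdisc : g₂ ^ 3 - 27 * g₃ ^ 2 = 16 * ((x - y) * (y - z) * (x - z)) ^ 2 := by
    have hg₃ : g₃ = 4 * x ^ 3 - g₂ * x := by linear_combination -hx
    rw [hg₃, hsum, hg₂]
    ring
  rw [hdisc]
  exact mul_ne_zero (by norm_num) (pow_ne_zero 2 (mul_ne_zero (mul_ne_zero (sub_ne_zero.2 hxy)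
    (sub_ne_zero.2 hyz)) (sub_ne_zero.2 hxz)))

variable (L) in
lemma discriminant_ne_zero : L.g₂ ^ 3 - 27 * L.g₃ ^ 2 ≠ 0 := by
  let p (α β : ℚ) : ℂ := α * L.ω₁ + β * L.ω₂
  have hmem (α β : ℚ) : p α β ∈ L.lattice ↔ α.den = 1 ∧ β.den = 1 :=
    L.mul_ω₁_add_mul_ω₂_mem_lattice
  have hadd (α β γ δ : ℚ) : p (α - γ) (β - δ) = p α β - p γ δ := by
    simp only [p, Rat.cast_sub]; ring
  have htwo (α β : ℚ) : p (2 * α) (2 * β) = 2 * p α β := by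
    simp only [p, Rat.cast_mul, Rat.cast_ofNat]; ring
  have root {α β : ℚ} (h : p α β ∉ L.lattice) (h2 : 2 * p α β ∈ L.lattice) :
      4 * ℘[L] (p α β) ^ 3 - L.g₂ * ℘[L] (p α β) - L.g₃ = 0 := by
    rw [← L.derivWeierstrassP_sq _ h, derivWeierstrassP_eq_zero_of_two_mul_mem h2,
      zero_pow two_ne_zero]
  have h₁ : p (1 / 2) 0 ∉ L.lattice := by rw [hmem]; norm_num
  have h₂ : p 0 (1 / 2) ∉ L.lattice := by rw [hmem]; norm_num
  have h₃ : p (1 / 2) (1 / 2) ∉ L.lattice := by rw [hmem]; norm_num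
  have h₁' : 2 * p (1 / 2) 0 ∈ L.lattice := by rw [← htwo, hmem]; norm_num
  have h₂' : 2 * p 0 (1 / 2) ∈ L.lattice := by rw [← htwo, hmem]; norm_num
  have h₃' : 2 * p (1 / 2) (1 / 2) ∈ L.lattice := by rw [← htwo, hmem]; norm_num
  exact cubic_discriminant_ne_zero (root h₁ h₁') (root h₂ h₂') (root h₃ h₃')
    (weierstrassP_ne_of_two_mul_mem h₁ h₂ h₁' h₂' (by rw [← hadd, hmem]; norm_num))
    (weierstrassP_ne_of_two_mul_mem h₂ h₃ h₂' h₃' (by rw [← hadd, hmem]; norm_num))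
    (weierstrassP_ne_of_two_mul_mem h₁ h₃ h₁' h₃' (by rw [← hadd, hmem]; norm_num))

end FixedPeriods

/-! ### Series over a lattice depending on parameters -/

section LatticeDecay

open Asymptotics

/-- The index set of the non-zero points of a lattice of rank two. -/
abbrev LatticeIndex : Type := {p : ℤ × ℤ // p ≠ 0}

lemma one_le_norm_latticeIndex (p : LatticeIndex) : 1 ≤ ‖(p : ℤ × ℤ)‖ := by
  have hp : (p : ℤ × ℤ).1 ≠ 0 ∨ (p : ℤ × ℤ).2 ≠ 0 := by
    by_contra! h
    exact p.2 (Prod.ext h.1 h.2)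
  rw [Prod.norm_def, le_max_iff, Int.norm_eq_abs, Int.norm_eq_abs]
  exact_mod_cast hp.imp Int.one_le_abs Int.one_le_abs

lemma summable_norm_latticeIndex_inv_pow :
    Summable fun p : LatticeIndex => ‖(p : ℤ × ℤ)‖⁻¹ ^ 3 := by
  have hsum := (finTwoArrowEquiv ℤ).symm.summable_iff.2
    (EisensteinSeries.summable_one_div_norm_rpow (k := 3) (by norm_num))
  refine (hsum.subtype (fun p => p ≠ 0)).congr fun p => ?_
  have hnorm : ‖(finTwoArrowEquiv ℤ).symm p‖ = ‖(p : ℤ × ℤ)‖ := by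
    simp [finTwoArrowEquiv, Pi.norm_def, Prod.norm_def, Fin.univ_succ]
  rw [Function.comp_apply, Function.comp_apply, hnorm, Real.rpow_neg (norm_nonneg _), inv_pow]
  norm_cast

lemma norm_latPt_le (ω₁ ω₂ : ℂ) (p : ℤ × ℤ) : ‖latPt ω₁ ω₂ p‖ ≤ (‖ω₁‖ + ‖ω₂‖) * ‖p‖ := by
  have h₁ : ‖(p.1 : ℂ)‖ ≤ ‖p‖ := (Complex.norm_intCast _).trans_le (norm_fst_le p)
  have h₂ : ‖(p.2 : ℂ)‖ ≤ ‖p‖ := (Complex.norm_intCast _).trans_le (norm_snd_le p)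
  calc ‖latPt ω₁ ω₂ p‖ ≤ ‖(p.1 : ℂ)‖ * ‖ω₁‖ + ‖(p.2 : ℂ)‖ * ‖ω₂‖ := by
        simpa only [latPt, norm_mul] using norm_add_le ((p.1 : ℂ) * ω₁) ((p.2 : ℂ) * ω₂)
    _ ≤ ‖p‖ * ‖ω₁‖ + ‖p‖ * ‖ω₂‖ := by gcongr
    _ = (‖ω₁‖ + ‖ω₂‖) * ‖p‖ := by ring

lemma isBigO_norm_latPt {ω₁ ω₂ : ℂ} (hω : LinearIndependent ℝ ![ω₁, ω₂]) :
    (fun p : ℤ × ℤ => ‖p‖) =O[⊤] fun p => latPt ω₁ ω₂ p := by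
  let f : ℝ × ℝ →ₗ[ℝ] ℂ :=
    (LinearMap.fst ℝ ℝ ℝ).smulRight ω₁ + (LinearMap.snd ℝ ℝ ℝ).smulRight ω₂
  have hker : LinearMap.ker f = ⊥ := LinearMap.ker_eq_bot'.2 fun x hx =>
    Prod.ext_iff.2 (LinearIndependent.pair_iff.1 hω x.1 x.2 hx)
  obtain ⟨K, -, hK⟩ := f.exists_antilipschitzWith hker
  refine isBigO_top.2 ⟨K, fun p => ?_⟩
  have hf : f (p.1, p.2) = latPt ω₁ ω₂ p := by simp [f, latPt]
  have hnorm : ‖((p.1 : ℝ), (p.2 : ℝ))‖ = ‖p‖ := rfl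
  simpa [hf, hnorm] using hK.le_mul_norm (map_zero f) (p.1, p.2)

lemma isBigO_norm_add_latPt {ω₁ ω₂ z : ℂ} (hω : LinearIndependent ℝ ![ω₁, ω₂])
    (hz : z ∉ latticeSet ω₁ ω₂) :
    (fun p : ℤ × ℤ => ‖p‖) =O[⊤] fun p => z + latPt ω₁ ω₂ p := by
  have hne (p : ℤ × ℤ) : z + latPt ω₁ ω₂ p ≠ 0 := fun h =>
    hz ⟨-p.1, -p.2, by simp only [latPt] at h; push_cast; linear_combination h⟩
  have hconst : (fun _ : ℤ × ℤ => z) =o[cofinite] fun p : ℤ × ℤ => ‖p‖ := by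
    refine isLittleO_const_left.2 (Or.inr ?_)
    simpa [Function.comp_def, cocompact_eq_cofinite] using tendsto_norm_cocompact_atTop (E := ℤ × ℤ)
  have hbig := (isBigO_norm_latPt hω).mono (le_top (a := cofinite))
  exact isBigO_top.2 ((isBigO_cofinite_iff fun p hp => absurd hp (hne p)).1
    (hbig.trans (hconst.trans_isBigO hbig).right_isBigO_add))

/-- The parameter space of triples `(z, ω₁, ω₂)`. -/
abbrev LatticeParam : Type := ℂ × ℂ × ℂ

/-- The triples `(z, ω₁, ω₂)` such that `ω₁, ω₂` span a lattice not containing `z`. -/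
def IsRegularParam (x : LatticeParam) : Prop :=
  LinearIndependent ℝ ![x.2.1, x.2.2] ∧ x.1 ∉ latticeSet x.2.1 x.2.2

/-- The projection `(z, ω₁, ω₂) ↦ z` as a linear form. -/
noncomputable def argForm : LatticeParam →L[ℂ] ℂ := ContinuousLinearMap.fst ℂ ℂ (ℂ × ℂ)

/-- The lattice point `(z, ω₁, ω₂) ↦ p₁ω₁ + p₂ω₂` as a linear form. -/
noncomputable def latticeForm (p : ℤ × ℤ) : LatticeParam →L[ℂ] ℂ :=
  ((p.1 : ℂ) • ContinuousLinearMap.fst ℂ ℂ ℂ + (p.2 : ℂ) • ContinuousLinearMap.snd ℂ ℂ ℂ).comp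
    (ContinuousLinearMap.snd ℂ ℂ (ℂ × ℂ))

@[simp] lemma argForm_apply (x : LatticeParam) : argForm x = x.1 := rfl

@[simp] lemma latticeForm_apply (p : ℤ × ℤ) (x : LatticeParam) :
    latticeForm p x = latPt x.2.1 x.2.2 p := rfl

lemma norm_latticeForm_le (p : ℤ × ℤ) : ‖latticeForm p‖ ≤ 2 * ‖p‖ := by
  refine ContinuousLinearMap.opNorm_le_bound _ (by positivity) fun x => ?_
  have hx : ‖x.2.1‖ + ‖x.2.2‖ ≤ 2 * ‖x‖ := by
    linarith [norm_fst_le x.2, norm_snd_le x.2, norm_snd_le x]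
  calc ‖latPt x.2.1 x.2.2 p‖ ≤ (‖x.2.1‖ + ‖x.2.2‖) * ‖p‖ := norm_latPt_le _ _ _
    _ ≤ 2 * ‖x‖ * ‖p‖ := by gcongr
    _ = 2 * ‖p‖ * ‖x‖ := by ring

-- `ℓ i x - ℓ i x₀ = ℓ i (x - x₀)` is `o(N i)` as `x → x₀`, uniformly in `i`.
lemma isBigO_apply_of_isBigO_apply_self {𝕜 E ι : Type*} [NontriviallyNormedField 𝕜]
    [NormedAddCommGroup E] [NormedSpace 𝕜 E] {N : ι → ℝ} {ℓ : ι → E →L[𝕜] 𝕜} {x₀ : E}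
    (hℓ : ℓ =O[⊤] N) (h₀ : N =O[⊤] fun i => ℓ i x₀) :
    (fun q : E × ι => N q.2) =O[𝓝 x₀ ×ˢ ⊤] fun q => ℓ q.2 q.1 := by
  have hsub : (fun q : E × ι => q.1 - x₀) =o[𝓝 x₀ ×ˢ ⊤] fun _ => (1 : ℝ) :=
    (isLittleO_one_iff ℝ).2 (tendsto_sub_nhds_zero_iff.2 tendsto_fst)
  have hdiff : (fun q : E × ι => ℓ q.2 (q.1 - x₀)) =o[𝓝 x₀ ×ˢ ⊤] fun q => N q.2 := by
    refine (isBigO_of_le _ fun q => ?_).trans_isLittleO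
      (((hℓ.comp_tendsto tendsto_snd).norm_left.mul_isLittleO hsub.norm_left).congr_right
        fun q => mul_one (N q.2))
    simpa using (ℓ q.2).le_opNorm (q.1 - x₀)
  have hN := h₀.comp_tendsto (tendsto_snd (f := 𝓝 x₀) (g := ⊤))
  refine hN.trans ((hdiff.trans_isBigO hN).right_isBigO_add.congr_right fun q => ?_)
  simp

/-- `φ p x = O(‖p‖⁻ᵏ)`, uniformly in the index `p` and in `x` near `x₀`. -/
def LatticeDecay (x₀ : LatticeParam) (k : ℕ) (φ : LatticeIndex → LatticeParam → ℂ) : Prop :=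
  (fun q : LatticeParam × LatticeIndex => φ q.2 q.1) =O[𝓝 x₀ ×ˢ ⊤]
    fun q => ‖(q.2 : ℤ × ℤ)‖⁻¹ ^ k

namespace LatticeDecay

variable {x₀ : LatticeParam} {k l : ℕ} {φ ψ : LatticeIndex → LatticeParam → ℂ}

lemma congr (hφ : LatticeDecay x₀ k φ) (h : ∀ᶠ x in 𝓝 x₀, ∀ p, φ p x = ψ p x) :
    LatticeDecay x₀ k ψ := by
  refine IsBigO.congr' hφ ?_ EventuallyEq.rfl
  rw [EventuallyEq, ← principal_univ, eventually_prod_principal_iff]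
  exact h.mono fun x hx p _ => hx p

lemma add (hφ : LatticeDecay x₀ k φ) (hψ : LatticeDecay x₀ k ψ) :
    LatticeDecay x₀ k fun p x => φ p x + ψ p x :=
  IsBigO.add hφ hψ

lemma mul (hφ : LatticeDecay x₀ k φ) (hψ : LatticeDecay x₀ l ψ) :
    LatticeDecay x₀ (k + l) fun p x => φ p x * ψ p x :=
  (IsBigO.mul hφ hψ).congr_right fun _ => (pow_add _ _ _).symm

lemma const_mul (c : ℂ) (hφ : LatticeDecay x₀ k φ) : LatticeDecay x₀ k fun p x => c * φ p x :=
  IsBigO.const_mul_left hφ c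

lemma pow (hφ : LatticeDecay x₀ 1 φ) (n : ℕ) : LatticeDecay x₀ n fun p x => φ p x ^ n :=
  (IsBigO.pow hφ n).congr_right fun _ => by rw [pow_one]

lemma of_le (hφ : LatticeDecay x₀ l φ) (hkl : k ≤ l) : LatticeDecay x₀ k φ := by
  refine IsBigO.trans hφ (isBigO_of_le _ fun q => ?_)
  simp only [norm_pow, norm_inv, norm_norm]
  exact pow_le_pow_of_le_one (by positivity) (inv_le_one_of_one_le₀ (one_le_norm_latticeIndex q.2))
    hkl

lemma mul_latPt (hφ : LatticeDecay x₀ (k + 1) φ) (v₁ v₂ : ℂ) :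
    LatticeDecay x₀ k fun p x => φ p x * latPt v₁ v₂ p := by
  have hv : (fun q : LatticeParam × LatticeIndex => latPt v₁ v₂ q.2) =O[𝓝 x₀ ×ˢ ⊤]
      fun q => ‖(q.2 : ℤ × ℤ)‖ :=
    IsBigO.of_bound _ (.of_forall fun q => by simpa using norm_latPt_le v₁ v₂ q.2)
  refine (IsBigO.mul hφ hv).congr_right fun q => ?_
  have hq : ‖(q.2 : ℤ × ℤ)‖ ≠ 0 := (one_pos.trans_le (one_le_norm_latticeIndex q.2)).ne'
  rw [pow_succ, mul_assoc, inv_mul_cancel₀ hq, mul_one]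

lemma zero (x₀ : LatticeParam) (k : ℕ) : LatticeDecay x₀ k fun _ _ => 0 :=
  isBigO_zero _ _

lemma arg (x₀ : LatticeParam) : LatticeDecay x₀ 0 fun _ x => x.1 := by
  have htend : Tendsto (fun q : LatticeParam × LatticeIndex => q.1.1) (𝓝 x₀ ×ˢ ⊤) (𝓝 x₀.1) :=
    continuous_fst.continuousAt.tendsto.comp tendsto_fst
  simpa only [LatticeDecay, pow_zero] using htend.isBigO_one ℝ

lemma summable (hφ : LatticeDecay x₀ 3 φ) : Summable fun p => φ p x₀ := by
  have hx : Tendsto (fun p : LatticeIndex => (x₀, p)) ⊤ (𝓝 x₀ ×ˢ ⊤) :=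
    (tendsto_const_nhds).prodMk tendsto_id
  exact summable_of_isBigO summable_norm_latticeIndex_inv_pow
    ((IsBigO.comp_tendsto hφ hx).mono le_top)

end LatticeDecay

end LatticeDecay

section InversePowers

open Asymptotics

/-- The term `(z + λ)⁻¹`, where `λ` is the lattice point with index `p`. -/
noncomputable def poleTerm (p : LatticeIndex) (x : LatticeParam) : ℂ :=
  (x.1 + latPt x.2.1 x.2.2 p)⁻¹

/-- The term `λ⁻¹`, where `λ` is the lattice point with index `p`. -/
noncomputable def periodTerm (p : LatticeIndex) (x : LatticeParam) : ℂ :=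
  (latPt x.2.1 x.2.2 p)⁻¹

/-- The remainder `(z + λ)⁻ᵏ - λ⁻ᵏ` of the Taylor expansion at `z = 0` to order zero. -/
noncomputable def poleRemainder₀ (k : ℕ) (p : LatticeIndex) (x : LatticeParam) : ℂ :=
  poleTerm p x ^ k - periodTerm p x ^ k

/-- The remainder `(z + λ)⁻ᵏ - λ⁻ᵏ + k z λ⁻ᵏ⁻¹` of the Taylor expansion at `z = 0` to order one. -/
noncomputable def poleRemainder₁ (k : ℕ) (p : LatticeIndex) (x : LatticeParam) : ℂ :=
  poleTerm p x ^ k - periodTerm p x ^ k + k * x.1 * periodTerm p x ^ (k + 1)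

variable {x₀ : LatticeParam}

lemma isBigO_norm_latticeForm (hx₀ : IsRegularParam x₀) :
    (fun q : LatticeParam × LatticeIndex => ‖(q.2 : ℤ × ℤ)‖) =O[𝓝 x₀ ×ˢ ⊤]
      fun q => latPt q.1.2.1 q.1.2.2 q.2 :=
  isBigO_apply_of_isBigO_apply_self (ℓ := fun p : LatticeIndex => latticeForm p)
    (IsBigO.of_bound 2 (.of_forall fun p => by simpa using norm_latticeForm_le p))
    ((isBigO_norm_latPt hx₀.1).comp_tendsto tendsto_top)

lemma isBigO_norm_argForm_add_latticeForm (hx₀ : IsRegularParam x₀) :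
    (fun q : LatticeParam × LatticeIndex => ‖(q.2 : ℤ × ℤ)‖) =O[𝓝 x₀ ×ˢ ⊤]
      fun q => q.1.1 + latPt q.1.2.1 q.1.2.2 q.2 := by
  refine isBigO_apply_of_isBigO_apply_self
    (ℓ := fun p : LatticeIndex => argForm + latticeForm p)
    (IsBigO.of_bound (‖argForm‖ + 2) (.of_forall fun p => ?_))
    ((isBigO_norm_add_latPt hx₀.1 hx₀.2).comp_tendsto tendsto_top)
  calc ‖argForm + latticeForm p‖ ≤ ‖argForm‖ * 1 + 2 * ‖(p : ℤ × ℤ)‖ :=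
        (norm_add_le _ _).trans (add_le_add (mul_one _).ge (norm_latticeForm_le p))
    _ ≤ ‖argForm‖ * ‖(p : ℤ × ℤ)‖ + 2 * ‖(p : ℤ × ℤ)‖ := by
        gcongr
        exact one_le_norm_latticeIndex p
    _ = (‖argForm‖ + 2) * ‖‖(p : ℤ × ℤ)‖‖ := by rw [norm_norm, add_mul]

lemma eventually_ne_zero_of_isBigO_norm {f : LatticeIndex → LatticeParam → ℂ}
    (hf : (fun q : LatticeParam × LatticeIndex => ‖(q.2 : ℤ × ℤ)‖) =O[𝓝 x₀ ×ˢ ⊤]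
      fun q => f q.2 q.1) : ∀ᶠ x in 𝓝 x₀, ∀ p, f p x ≠ 0 := by
  have h := hf.eq_zero_imp
  rw [← principal_univ, eventually_prod_principal_iff] at h
  exact h.mono fun x hx p hp =>
    (one_pos.trans_le (one_le_norm_latticeIndex p)).ne' (hx p trivial hp)

lemma latticeDecay_inv_of_isBigO_norm {f : LatticeIndex → LatticeParam → ℂ}
    (hf : (fun q : LatticeParam × LatticeIndex => ‖(q.2 : ℤ × ℤ)‖) =O[𝓝 x₀ ×ˢ ⊤]
      fun q => f q.2 q.1) : LatticeDecay x₀ 1 fun p x => (f p x)⁻¹ := by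
  refine (hf.inv_rev (.of_forall fun q hq => ?_)).congr_right fun q => (pow_one _).symm
  exact absurd hq (one_pos.trans_le (one_le_norm_latticeIndex q.2)).ne'

lemma eventually_add_latPt_ne_zero (hx₀ : IsRegularParam x₀) :
    ∀ᶠ x in 𝓝 x₀, ∀ p : LatticeIndex, x.1 + latPt x.2.1 x.2.2 p ≠ 0 :=
  eventually_ne_zero_of_isBigO_norm (isBigO_norm_argForm_add_latticeForm hx₀)

lemma eventually_latPt_ne_zero (hx₀ : IsRegularParam x₀) :
    ∀ᶠ x in 𝓝 x₀, ∀ p : LatticeIndex, latPt x.2.1 x.2.2 p ≠ 0 :=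
  eventually_ne_zero_of_isBigO_norm (isBigO_norm_latticeForm hx₀)

lemma latticeDecay_poleTerm (hx₀ : IsRegularParam x₀) : LatticeDecay x₀ 1 poleTerm :=
  latticeDecay_inv_of_isBigO_norm (isBigO_norm_argForm_add_latticeForm hx₀)

lemma latticeDecay_periodTerm (hx₀ : IsRegularParam x₀) : LatticeDecay x₀ 1 periodTerm :=
  latticeDecay_inv_of_isBigO_norm (isBigO_norm_latticeForm hx₀)

lemma eventually_poleTerm_sub_periodTerm (hx₀ : IsRegularParam x₀) : ∀ᶠ x in 𝓝 x₀, ∀ p,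
    poleTerm p x - periodTerm p x = -1 * x.1 * poleTerm p x * periodTerm p x := by
  filter_upwards [eventually_add_latPt_ne_zero hx₀, eventually_latPt_ne_zero hx₀] with x hadd hne p
  rw [poleTerm, periodTerm, inv_sub_inv (hadd p) (hne p)]
  field_simp
  ring

lemma latticeDecay_poleTerm_sub_periodTerm (hx₀ : IsRegularParam x₀) :
    LatticeDecay x₀ 2 fun p x => poleTerm p x - periodTerm p x :=
  ((((LatticeDecay.arg x₀).const_mul (-1)).mul (latticeDecay_poleTerm hx₀)).mul
    (latticeDecay_periodTerm hx₀)).congr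
      ((eventually_poleTerm_sub_periodTerm hx₀).mono fun _ h p => (h p).symm)

lemma latticeDecay_poleRemainder₀ (hx₀ : IsRegularParam x₀) (k : ℕ) :
    LatticeDecay x₀ (k + 1) (poleRemainder₀ k) := by
  induction k with
  | zero => exact (LatticeDecay.zero x₀ 1).congr (.of_forall fun x p => by simp [poleRemainder₀])
  | succ k ih =>
    refine LatticeDecay.congr (((ih.mul (latticeDecay_poleTerm hx₀))).add
      (((latticeDecay_periodTerm hx₀).pow k).mul (latticeDecay_poleTerm_sub_periodTerm hx₀)))
      (.of_forall fun x p => ?_)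
    simp only [poleRemainder₀]
    ring

lemma latticeDecay_poleRemainder₁_one (hx₀ : IsRegularParam x₀) :
    LatticeDecay x₀ 3 (poleRemainder₁ 1) := by
  refine ((((LatticeDecay.arg x₀).const_mul (-1)).mul (latticeDecay_periodTerm hx₀)).mul
    (latticeDecay_poleTerm_sub_periodTerm hx₀)).congr
      ((eventually_poleTerm_sub_periodTerm hx₀).mono fun x h p => ?_)
  simp only [poleRemainder₁]
  linear_combination -h p

lemma latticeDecay_poleRemainder₁ (hx₀ : IsRegularParam x₀) (k : ℕ) :
    LatticeDecay x₀ (k + 2) (poleRemainder₁ k) := by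
  have hv := latticeDecay_periodTerm hx₀
  induction k with
  | zero => exact (LatticeDecay.zero x₀ 2).congr (.of_forall fun x p => by simp [poleRemainder₁])
  | succ k ih =>
    have hmid := ((LatticeDecay.arg x₀).mul (hv.pow (k + 1))).mul
      (latticeDecay_poleTerm_sub_periodTerm hx₀)
    rw [zero_add] at hmid
    refine LatticeDecay.congr (((ih.mul (latticeDecay_poleTerm hx₀)).add
      (hmid.const_mul (-k))).add ((hv.pow k).mul (latticeDecay_poleRemainder₁_one hx₀)))
      (.of_forall fun x p => ?_)
    simp only [poleRemainder₁]
    push_cast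
    ring

end InversePowers

section Differentiation

open Asymptotics

lemma hasFDerivAt_tsum_of_isBigO {𝕜 E F ι : Type*} [RCLike 𝕜] [NormedAddCommGroup E]
    [NormedSpace 𝕜 E] [NormedAddCommGroup F] [NormedSpace 𝕜 F] [CompleteSpace F]
    {f : ι → E → F} {f' : ι → E → E →L[𝕜] F} {u : ι → ℝ} {x₀ : E} (hu : Summable u)
    (hf : ∀ᶠ x in 𝓝 x₀, ∀ i, HasFDerivAt (f i) (f' i x) x)
    (hf' : (fun q : E × ι => f' q.2 q.1) =O[𝓝 x₀ ×ˢ ⊤] fun q => u q.2)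
    (hf₀ : Summable fun i => f i x₀) :
    HasFDerivAt (fun x => ∑' i, f i x) (∑' i, f' i x₀) x₀ := by
  let _ : NormedSpace ℝ E := NormedSpace.restrictScalars ℝ 𝕜 E
  obtain ⟨C, hC⟩ := hf'.bound
  rw [← principal_univ, eventually_prod_principal_iff] at hC
  obtain ⟨ε, hε, hball⟩ := Metric.eventually_nhds_iff_ball.1 (hf.and hC)
  have hx₀ := Metric.mem_ball_self (x := x₀) hε
  exact hasFDerivAt_tsum_of_isPreconnected (hu.norm.mul_left C) Metric.isOpen_ball
    (convex_ball x₀ ε).isPreconnected (fun i x hx => (hball x hx).1 i)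
    (fun i x hx => (hball x hx).2 i trivial) hx₀ hf₀ hx₀

lemma LatticeDecay.isBigO_smul_latticeForm {x₀ : LatticeParam} {k : ℕ}
    {φ : LatticeIndex → LatticeParam → ℂ} (hφ : LatticeDecay x₀ (k + 1) φ) :
    (fun q : LatticeParam × LatticeIndex => φ q.2 q.1 • latticeForm q.2) =O[𝓝 x₀ ×ˢ ⊤]
      fun q => ‖(q.2 : ℤ × ℤ)‖⁻¹ ^ k := by
  have hform : (fun q : LatticeParam × LatticeIndex => latticeForm q.2) =O[𝓝 x₀ ×ˢ ⊤]
      fun q => ‖(q.2 : ℤ × ℤ)‖ :=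
    IsBigO.of_bound 2 (.of_forall fun q => by simpa using norm_latticeForm_le q.2)
  refine (IsBigO.smul hφ hform).congr_right fun q => ?_
  have hq : ‖(q.2 : ℤ × ℤ)‖ ≠ 0 := (one_pos.trans_le (one_le_norm_latticeIndex q.2)).ne'
  rw [smul_eq_mul, pow_succ, mul_assoc, inv_mul_cancel₀ hq, mul_one]

variable {x₀ : LatticeParam} {F A B : LatticeIndex → LatticeParam → ℂ}

lemma hasFDerivAt_tsum_latticeIndex (hF : LatticeDecay x₀ 3 F) (hA : LatticeDecay x₀ 3 A)
    (hB : LatticeDecay x₀ 4 B)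
    (hderiv : ∀ᶠ x in 𝓝 x₀, ∀ p, HasFDerivAt (F p) (A p x • argForm + B p x • latticeForm p) x) :
    ∃ D : LatticeParam →L[ℂ] ℂ, HasFDerivAt (fun x => ∑' p, F p x) D x₀ ∧
      ∀ v, D v = v.1 * ∑' p, A p x₀ + ∑' p, B p x₀ * latPt v.2.1 v.2.2 p := by
  have hA' : (fun q : LatticeParam × LatticeIndex => A q.2 q.1 • argForm) =O[𝓝 x₀ ×ˢ ⊤]
      fun q => ‖(q.2 : ℤ × ℤ)‖⁻¹ ^ 3 :=
    (IsBigO.smul hA (isBigO_const_const argForm one_ne_zero _)).congr_right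
      fun q => (smul_eq_mul _ (1 : ℝ)).trans (mul_one _)
  have hD := hasFDerivAt_tsum_of_isBigO summable_norm_latticeIndex_inv_pow hderiv
    (hA'.add hB.isBigO_smul_latticeForm) hF.summable
  refine ⟨_, hD, fun v => ?_⟩
  have hx : Tendsto (fun p : LatticeIndex => (x₀, p)) ⊤ (𝓝 x₀ ×ˢ ⊤) :=
    tendsto_const_nhds.prodMk tendsto_id
  have hsum : Summable fun p : LatticeIndex => A p x₀ • argForm + B p x₀ • latticeForm p :=
    summable_of_isBigO summable_norm_latticeIndex_inv_pow
      (((hA'.add hB.isBigO_smul_latticeForm).comp_tendsto hx).mono le_top)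
  have happly := (ContinuousLinearMap.apply ℂ ℂ v).map_tsum hsum
  simp only [ContinuousLinearMap.apply_apply, _root_.add_apply,
    _root_.smul_apply, argForm_apply, latticeForm_apply, smul_eq_mul] at happly
  rw [happly, Summable.tsum_add (hA.summable.mul_right _) (hB.mul_latPt _ _).summable,
    tsum_mul_right, mul_comm]

lemma hasDerivAt_tsum_latticeIndex {𝕜 : Type*} [NontriviallyNormedField 𝕜] [NormedAlgebra 𝕜 ℂ]
    {γ : 𝕜 → LatticeParam} {γ' : LatticeParam} {t : 𝕜} (hγ : HasDerivAt γ γ' t)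
    (hF : LatticeDecay (γ t) 3 F) (hA : LatticeDecay (γ t) 3 A) (hB : LatticeDecay (γ t) 4 B)
    (hderiv : ∀ᶠ x in 𝓝 (γ t), ∀ p,
      HasFDerivAt (F p) (A p x • argForm + B p x • latticeForm p) x) :
    HasDerivAt (fun s => ∑' p, F p (γ s))
      (γ'.1 * ∑' p, A p (γ t) + ∑' p, B p (γ t) * latPt γ'.2.1 γ'.2.2 p) t := by
  obtain ⟨D, hD, hDv⟩ := hasFDerivAt_tsum_latticeIndex hF hA hB hderiv
  rw [← hDv]
  exact (hD.restrictScalars 𝕜).comp_hasDerivAt t hγ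

lemma hasDerivAt_inv_pow {𝕜 : Type*} [NontriviallyNormedField 𝕜] {w : 𝕜} (hw : w ≠ 0) (k : ℕ) :
    HasDerivAt (fun w => w⁻¹ ^ k) (-k * w⁻¹ ^ (k + 1)) w := by
  refine ((hasDerivAt_inv hw).fun_pow k).congr_deriv ?_
  cases k with
  | zero => simp
  | succ k => rw [Nat.add_sub_cancel, ← inv_pow]; ring

lemma hasFDerivAt_poleTerm_pow {p : LatticeIndex} {x : LatticeParam}
    (hx : x.1 + latPt x.2.1 x.2.2 p ≠ 0) (k : ℕ) :
    HasFDerivAt (fun x => poleTerm p x ^ k)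
      ((-k * poleTerm p x ^ (k + 1)) • (argForm + latticeForm p)) x :=
  (hasDerivAt_inv_pow hx k).comp_hasFDerivAt (f := fun x => (argForm + latticeForm p) x) x
    (argForm + latticeForm p).hasFDerivAt

lemma hasFDerivAt_periodTerm_pow {p : LatticeIndex} {x : LatticeParam}
    (hx : latPt x.2.1 x.2.2 p ≠ 0) (k : ℕ) :
    HasFDerivAt (fun x => periodTerm p x ^ k)
      ((-k * periodTerm p x ^ (k + 1)) • latticeForm p) x :=
  (hasDerivAt_inv_pow hx k).comp_hasFDerivAt (f := fun x => latticeForm p x) x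
    (latticeForm p).hasFDerivAt

lemma hasFDerivAt_poleRemainder₀ {p : LatticeIndex} {x : LatticeParam}
    (hadd : x.1 + latPt x.2.1 x.2.2 p ≠ 0) (hne : latPt x.2.1 x.2.2 p ≠ 0) (k : ℕ) :
    HasFDerivAt (poleRemainder₀ k p) ((-k * poleTerm p x ^ (k + 1)) • argForm +
      (-k * poleRemainder₀ (k + 1) p x) • latticeForm p) x := by
  refine ((hasFDerivAt_poleTerm_pow hadd k).sub
    (hasFDerivAt_periodTerm_pow hne k)).congr_fderiv ?_
  simp only [poleRemainder₀]
  module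

lemma hasFDerivAt_poleRemainder₁ {p : LatticeIndex} {x : LatticeParam}
    (hadd : x.1 + latPt x.2.1 x.2.2 p ≠ 0) (hne : latPt x.2.1 x.2.2 p ≠ 0) (k : ℕ) :
    HasFDerivAt (poleRemainder₁ k p) ((-k * poleRemainder₀ (k + 1) p x) • argForm +
      (-k * poleRemainder₁ (k + 1) p x) • latticeForm p) x := by
  refine ((hasFDerivAt_poleRemainder₀ hadd hne k).add
    ((argForm.hasFDerivAt.const_mul (k : ℂ)).mul
      (hasFDerivAt_periodTerm_pow hne (k + 1)))).congr_fderiv ?_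
  simp only [poleRemainder₀, poleRemainder₁, argForm_apply]
  push_cast
  module

end Differentiation

/-! ### Elliptic functions along a path of lattices -/

section Variation

lemma tsum_ite_eq_tsum_latticeIndex (f : ℤ × ℤ → ℂ) :
    ∑' p : ℤ × ℤ, (if p = 0 then 0 else f p) = ∑' p : LatticeIndex, f p := by
  refine Eq.trans (tsum_congr fun p => ?_) (tsum_subtype {p : ℤ × ℤ | p ≠ 0} f).symm
  by_cases hp : p = 0 <;> simp [Set.indicator, hp]

lemma latPt_neg (ω₁ ω₂ : ℂ) (p : ℤ × ℤ) : latPt ω₁ ω₂ (-p) = -latPt ω₁ ω₂ p := by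
  simp only [latPt, Prod.fst_neg, Prod.snd_neg, Int.cast_neg]
  ring

/-- The involution `p ↦ -p` of the index set. -/
def negLatticeIndex : LatticeIndex ≃ LatticeIndex :=
  (Equiv.neg (ℤ × ℤ)).subtypeEquiv fun _ => neg_ne_zero.symm

lemma latPt_negLatticeIndex (ω₁ ω₂ : ℂ) (p : LatticeIndex) :
    latPt ω₁ ω₂ (negLatticeIndex p) = -latPt ω₁ ω₂ p :=
  latPt_neg ω₁ ω₂ p

lemma periodTerm_negLatticeIndex_neg (p : LatticeIndex) (z ω₁ ω₂ : ℂ) :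
    periodTerm (negLatticeIndex p) (-z, ω₁, ω₂) = -periodTerm p (z, ω₁, ω₂) := by
  rw [periodTerm, latPt_negLatticeIndex, inv_neg, periodTerm]

lemma poleTerm_negLatticeIndex_neg (p : LatticeIndex) (z ω₁ ω₂ : ℂ) :
    poleTerm (negLatticeIndex p) (-z, ω₁, ω₂) = -poleTerm p (z, ω₁, ω₂) := by
  rw [poleTerm, latPt_negLatticeIndex, ← neg_add, inv_neg, poleTerm]

/-- The derivative `℘'` in `z`, as a series. -/
noncomputable def wpDeriv (ω₁ ω₂ z : ℂ) : ℂ :=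
  -2 * z⁻¹ ^ 3 + ∑' p, -2 * poleTerm p (z, ω₁, ω₂) ^ 3

/-- The second derivative `℘''` in `z`, as a series. -/
noncomputable def wpDeriv₂ (ω₁ ω₂ z : ℂ) : ℂ :=
  6 * z⁻¹ ^ 4 + ∑' p, 6 * poleTerm p (z, ω₁, ω₂) ^ 4

/-- The derivative of `ζ` in the periods, in the direction `(v₁, v₂)`. -/
noncomputable def wzetaVariation (ω₁ ω₂ v₁ v₂ z : ℂ) : ℂ :=
  ∑' p, -1 * poleRemainder₁ 2 p (z, ω₁, ω₂) * latPt v₁ v₂ p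

/-- The derivative of `℘` in the periods, in the direction `(v₁, v₂)`. -/
noncomputable def wpVariation (ω₁ ω₂ v₁ v₂ z : ℂ) : ℂ :=
  ∑' p, -2 * poleRemainder₀ 3 p (z, ω₁, ω₂) * latPt v₁ v₂ p

/-- The derivative of `℘'` in the periods, in the direction `(v₁, v₂)`. -/
noncomputable def wpDerivVariation (ω₁ ω₂ v₁ v₂ z : ℂ) : ℂ :=
  ∑' p : LatticeIndex, 6 * poleTerm p (z, ω₁, ω₂) ^ 4 * latPt v₁ v₂ p

lemma wp_eq_tsum (ω₁ ω₂ z : ℂ) :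
    wp ω₁ ω₂ z = z⁻¹ ^ 2 + ∑' p, poleRemainder₀ 2 p (z, ω₁, ω₂) := by
  simp only [wp, tsum_ite_eq_tsum_latticeIndex, poleRemainder₀, poleTerm, periodTerm, inv_pow]

lemma wzeta_eq_tsum (ω₁ ω₂ z : ℂ) :
    wzeta ω₁ ω₂ z = z⁻¹ + ∑' p, poleRemainder₁ 1 p (z, ω₁, ω₂) := by
  rw [wzeta, tsum_ite_eq_tsum_latticeIndex, ← negLatticeIndex.tsum_eq]
  congr 1
  refine tsum_congr fun p => ?_
  simp only [poleRemainder₁, poleTerm, periodTerm, latPt_negLatticeIndex, sub_neg_eq_add, neg_sq,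
    inv_neg, inv_pow]
  push_cast
  ring

lemma g2_eq_tsum (ω₁ ω₂ z : ℂ) : g2 ω₁ ω₂ = 60 * ∑' p, periodTerm p (z, ω₁, ω₂) ^ 4 := by
  simp only [g2, tsum_ite_eq_tsum_latticeIndex, periodTerm, inv_pow]

lemma g3_eq_tsum (ω₁ ω₂ z : ℂ) : g3 ω₁ ω₂ = 140 * ∑' p, periodTerm p (z, ω₁, ω₂) ^ 6 := by
  simp only [g3, tsum_ite_eq_tsum_latticeIndex, periodTerm, inv_pow]

lemma wzeta_neg (ω₁ ω₂ z : ℂ) : wzeta ω₁ ω₂ (-z) = -wzeta ω₁ ω₂ z := by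
  rw [wzeta_eq_tsum, wzeta_eq_tsum, ← negLatticeIndex.tsum_eq, neg_add, ← tsum_neg, inv_neg]
  congr 1
  refine tsum_congr fun p => ?_
  simp only [poleRemainder₁, poleTerm_negLatticeIndex_neg, periodTerm_negLatticeIndex_neg]
  ring

lemma wp_neg (ω₁ ω₂ z : ℂ) : wp ω₁ ω₂ (-z) = wp ω₁ ω₂ z := by
  rw [wp_eq_tsum, wp_eq_tsum, ← negLatticeIndex.tsum_eq, inv_neg, neg_sq]
  congr 1
  refine tsum_congr fun p => ?_
  simp only [poleRemainder₀, poleTerm_negLatticeIndex_neg, periodTerm_negLatticeIndex_neg, neg_sq]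

lemma wpDeriv_neg (ω₁ ω₂ z : ℂ) : wpDeriv ω₁ ω₂ (-z) = -wpDeriv ω₁ ω₂ z := by
  rw [wpDeriv, wpDeriv, ← negLatticeIndex.tsum_eq, neg_add, ← tsum_neg, inv_neg]
  simp only [poleTerm_negLatticeIndex_neg]
  ring_nf

lemma wpVariation_neg (ω₁ ω₂ v₁ v₂ z : ℂ) :
    wpVariation ω₁ ω₂ v₁ v₂ (-z) = wpVariation ω₁ ω₂ v₁ v₂ z := by
  rw [wpVariation, wpVariation, ← negLatticeIndex.tsum_eq]
  refine tsum_congr fun p => ?_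
  simp only [poleRemainder₀, poleTerm_negLatticeIndex_neg, periodTerm_negLatticeIndex_neg,
    latPt_negLatticeIndex]
  ring

lemma wzetaVariation_neg (ω₁ ω₂ v₁ v₂ z : ℂ) :
    wzetaVariation ω₁ ω₂ v₁ v₂ (-z) = -wzetaVariation ω₁ ω₂ v₁ v₂ z := by
  rw [wzetaVariation, wzetaVariation, ← negLatticeIndex.tsum_eq, ← tsum_neg]
  refine tsum_congr fun p => ?_
  simp only [poleRemainder₁, poleTerm_negLatticeIndex_neg, periodTerm_negLatticeIndex_neg,
    latPt_negLatticeIndex]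
  ring

lemma IsRegularParam.arg_ne_zero {x : LatticeParam} (hx : IsRegularParam x) : x.1 ≠ 0 :=
  fun h => hx.2 (h ▸ ⟨0, 0, by simp⟩)

section Path

variable {𝕜 : Type*} [NontriviallyNormedField 𝕜] [NormedAlgebra 𝕜 ℂ] {a ω₁ ω₂ : 𝕜 → ℂ}
  {a' v₁ v₂ : ℂ} {t : 𝕜}

lemma hasDerivAt_inv_pow_comp (ha : HasDerivAt a a' t) (h₀ : a t ≠ 0) (k : ℕ) :
    HasDerivAt (fun s => (a s)⁻¹ ^ k) (a' * (-k * (a t)⁻¹ ^ (k + 1))) t := by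
  have h := (hasDerivAt_inv_pow h₀ k).scomp t ha
  simpa [Function.comp_def] using h

variable (ha : HasDerivAt a a' t) (h₁ : HasDerivAt ω₁ v₁ t) (h₂ : HasDerivAt ω₂ v₂ t)
  (hreg : IsRegularParam (a t, ω₁ t, ω₂ t))

include ha h₁ h₂ hreg

lemma hasDerivAt_wzeta :
    HasDerivAt (fun s => wzeta (ω₁ s) (ω₂ s) (a s))
      (-a' * wp (ω₁ t) (ω₂ t) (a t) + wzetaVariation (ω₁ t) (ω₂ t) v₁ v₂ (a t)) t := by
  have hterms := ((eventually_add_latPt_ne_zero hreg).and (eventually_latPt_ne_zero hreg)).mono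
    fun x hx p => hasFDerivAt_poleRemainder₁ (hx.1 p) (hx.2 p) 1
  have hsum := hasDerivAt_tsum_latticeIndex (ha.prodMk (h₁.prodMk h₂))
    (latticeDecay_poleRemainder₁ hreg 1) ((latticeDecay_poleRemainder₀ hreg 2).const_mul _)
    ((latticeDecay_poleRemainder₁ hreg 2).const_mul _) hterms
  have hpole := hasDerivAt_inv_pow_comp ha hreg.arg_ne_zero 1
  simp only [wzeta_eq_tsum]
  refine ((hpole.congr_of_eventuallyEq (.of_forall fun s => (pow_one _).symm)).add
    hsum).congr_deriv ?_
  rw [tsum_mul_left, wp_eq_tsum, wzetaVariation]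
  push_cast
  ring

lemma hasDerivAt_wp :
    HasDerivAt (fun s => wp (ω₁ s) (ω₂ s) (a s))
      (a' * wpDeriv (ω₁ t) (ω₂ t) (a t) + wpVariation (ω₁ t) (ω₂ t) v₁ v₂ (a t)) t := by
  have hterms := ((eventually_add_latPt_ne_zero hreg).and (eventually_latPt_ne_zero hreg)).mono
    fun x hx p => hasFDerivAt_poleRemainder₀ (hx.1 p) (hx.2 p) 2
  have hsum := hasDerivAt_tsum_latticeIndex (ha.prodMk (h₁.prodMk h₂))
    (latticeDecay_poleRemainder₀ hreg 2) (((latticeDecay_poleTerm hreg).pow 3).const_mul _)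
    ((latticeDecay_poleRemainder₀ hreg 3).const_mul _) hterms
  simp only [wp_eq_tsum]
  refine ((hasDerivAt_inv_pow_comp ha hreg.arg_ne_zero 2).add hsum).congr_deriv ?_
  rw [wpDeriv, wpVariation]
  push_cast
  ring

lemma hasDerivAt_wpDeriv :
    HasDerivAt (fun s => wpDeriv (ω₁ s) (ω₂ s) (a s))
      (a' * wpDeriv₂ (ω₁ t) (ω₂ t) (a t) + wpDerivVariation (ω₁ t) (ω₂ t) v₁ v₂ (a t)) t := by
  have hpow := (latticeDecay_poleTerm hreg).pow
  have hterms := (eventually_add_latPt_ne_zero hreg).mono fun x hx p =>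
    ((hasFDerivAt_poleTerm_pow (hx p) 3).const_mul (-2)).congr_fderiv
      (g' := (6 * poleTerm p x ^ 4) • argForm + (6 * poleTerm p x ^ 4) • latticeForm p)
      (by push_cast; module)
  have hsum := hasDerivAt_tsum_latticeIndex (ha.prodMk (h₁.prodMk h₂))
    ((hpow 3).const_mul _) (((hpow 4).const_mul 6).of_le (by norm_num)) ((hpow 4).const_mul 6)
    hterms
  refine (((hasDerivAt_inv_pow_comp ha hreg.arg_ne_zero 3).const_mul (-2)).add
    hsum).congr_deriv ?_
  rw [wpDeriv₂, wpDerivVariation]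
  push_cast
  ring

lemma differentiableAt_tsum_periodTerm_pow {k : ℕ} (hk : 3 ≤ k) :
    DifferentiableAt 𝕜 (fun s => ∑' p, periodTerm p (a s, ω₁ s, ω₂ s) ^ k) t := by
  have hpow := (latticeDecay_periodTerm hreg).pow
  have hterms := (eventually_latPt_ne_zero hreg).mono fun x hx p =>
    (hasFDerivAt_periodTerm_pow (hx p) k).congr_fderiv
      (g' := (0 : ℂ) • argForm + (-k * periodTerm p x ^ (k + 1)) • latticeForm p)
      (by module)
  exact (hasDerivAt_tsum_latticeIndex (ha.prodMk (h₁.prodMk h₂)) ((hpow k).of_le hk)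
    (LatticeDecay.zero _ 3) (((hpow (k + 1)).of_le (by omega)).const_mul _)
    hterms).differentiableAt

lemma differentiableAt_g2 : DifferentiableAt 𝕜 (fun s => g2 (ω₁ s) (ω₂ s)) t := by
  simp only [funext fun s => g2_eq_tsum (ω₁ s) (ω₂ s) (a s)]
  exact (differentiableAt_tsum_periodTerm_pow ha h₁ h₂ hreg (by norm_num)).const_mul 60

lemma differentiableAt_g3 : DifferentiableAt 𝕜 (fun s => g3 (ω₁ s) (ω₂ s)) t := by
  simp only [funext fun s => g3_eq_tsum (ω₁ s) (ω₂ s) (a s)]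
  exact (differentiableAt_tsum_periodTerm_pow ha h₁ h₂ hreg (by norm_num)).const_mul 140

end Path

variable {ω₁ ω₂ z : ℂ}

lemma hasDerivAt_tsum_mul_latPt {F A B : LatticeIndex → LatticeParam → ℂ}
    (hreg : IsRegularParam (z, ω₁, ω₂)) (hF : LatticeDecay (z, ω₁, ω₂) 4 F)
    (hA : LatticeDecay (z, ω₁, ω₂) 4 A) (hB : LatticeDecay (z, ω₁, ω₂) 5 B)
    (hderiv : ∀ x (p : LatticeIndex), x.1 + latPt x.2.1 x.2.2 p ≠ 0 → latPt x.2.1 x.2.2 p ≠ 0 →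
      HasFDerivAt (F p) (A p x • argForm + B p x • latticeForm p) x) (v₁ v₂ : ℂ) :
    HasDerivAt (fun z => ∑' p, F p (z, ω₁, ω₂) * latPt v₁ v₂ p)
      (∑' p, A p (z, ω₁, ω₂) * latPt v₁ v₂ p) z := by
  have hline : HasDerivAt (fun z => ((z, ω₁, ω₂) : LatticeParam)) (1, 0, 0) z :=
    (hasDerivAt_id z).prodMk ((hasDerivAt_const z _).prodMk (hasDerivAt_const z _))
  have hterms := ((eventually_add_latPt_ne_zero hreg).and (eventually_latPt_ne_zero hreg)).mono
    fun x hx p => ((hderiv x p (hx.1 p) (hx.2 p)).mul_const (latPt v₁ v₂ p)).congr_fderiv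
      (g' := (A p x * latPt v₁ v₂ p) • argForm + (B p x * latPt v₁ v₂ p) • latticeForm p)
      (by module)
  simpa [latPt] using hasDerivAt_tsum_latticeIndex hline (hF.mul_latPt v₁ v₂)
    (hA.mul_latPt v₁ v₂) (hB.mul_latPt v₁ v₂) hterms

lemma hasDerivAt_wzetaVariation (hreg : IsRegularParam (z, ω₁, ω₂)) (v₁ v₂ : ℂ) :
    HasDerivAt (wzetaVariation ω₁ ω₂ v₁ v₂) (-wpVariation ω₁ ω₂ v₁ v₂ z) z := by
  refine (hasDerivAt_tsum_mul_latPt hreg ((latticeDecay_poleRemainder₁ hreg 2).const_mul (-1))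
    ((latticeDecay_poleRemainder₀ hreg 3).const_mul 2)
    ((latticeDecay_poleRemainder₁ hreg 3).const_mul 2) (fun x p hadd hne => ?_)
    v₁ v₂).congr_deriv ?_
  · refine ((hasFDerivAt_poleRemainder₁ hadd hne 2).const_mul (-1)).congr_fderiv ?_
    push_cast
    module
  · rw [wpVariation, ← tsum_neg]
    exact tsum_congr fun p => by ring

lemma hasDerivAt_wpVariation (hreg : IsRegularParam (z, ω₁, ω₂)) (v₁ v₂ : ℂ) :
    HasDerivAt (wpVariation ω₁ ω₂ v₁ v₂) (wpDerivVariation ω₁ ω₂ v₁ v₂ z) z := by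
  refine hasDerivAt_tsum_mul_latPt hreg ((latticeDecay_poleRemainder₀ hreg 3).const_mul (-2))
    (((latticeDecay_poleTerm hreg).pow 4).const_mul 6)
    ((latticeDecay_poleRemainder₀ hreg 4).const_mul 6) (fun x p hadd hne => ?_) v₁ v₂
  refine ((hasFDerivAt_poleRemainder₀ hadd hne 3).const_mul (-2)).congr_fderiv ?_
  push_cast
  module

end Variation

section Identification

open PeriodPair

variable (L : PeriodPair)

lemma mem_latticeSet_iff {z : ℂ} : z ∈ latticeSet L.ω₁ L.ω₂ ↔ z ∈ L.lattice := by
  simp only [latticeSet, Set.mem_ofPred_eq, PeriodPair.mem_lattice, eq_comm]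

lemma eq_add_tsum_latticeIndex {f : ℂ → ℂ} {c : ℂ} (h : HasSum (fun l : L.lattice => f l) c) :
    c = f 0 + ∑' p : LatticeIndex, f (latPt L.ω₁ L.ω₂ p) := by
  have hpair : HasSum (fun p : ℤ × ℤ => f (latPt L.ω₁ L.ω₂ p)) c := by
    refine (L.latticeEquivProd.symm.toEquiv.hasSum_iff.2 h).congr_fun fun p => ?_
    exact congrArg f (L.latticeEquiv_symm_apply p).symm
  rw [← hpair.tsum_eq, hpair.summable.tsum_eq_add_tsum_ite 0, tsum_ite_eq_tsum_latticeIndex]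
  simp [latPt]

lemma wp_eq_weierstrassP (z : ℂ) : wp L.ω₁ L.ω₂ z = ℘[L] z := by
  rw [eq_add_tsum_latticeIndex L (f := fun l => 1 / (z - l) ^ 2 - 1 / l ^ 2)
    (L.hasSum_weierstrassP z), ← negLatticeIndex.tsum_eq, wp_eq_tsum]
  simp [poleRemainder₀, poleTerm, periodTerm, latPt_negLatticeIndex]

lemma wpDeriv_eq_derivWeierstrassP (z : ℂ) : wpDeriv L.ω₁ L.ω₂ z = ℘'[L] z := by
  rw [eq_add_tsum_latticeIndex L (f := fun l => -2 / (z - l) ^ 3) (L.hasSum_derivWeierstrassP z),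
    ← negLatticeIndex.tsum_eq, wpDeriv]
  simp [poleTerm, latPt_negLatticeIndex, div_eq_mul_inv]

lemma tsum_latPt_inv_pow {n : ℕ} (hn : 2 < n) :
    ∑' p : LatticeIndex, (latPt L.ω₁ L.ω₂ p ^ n)⁻¹ = L.G n := by
  have h := eq_add_tsum_latticeIndex L (f := fun l => ((l - 0) ^ n)⁻¹) (L.hasSum_sumInvPow 0 hn)
  simpa [show n ≠ 0 by omega] using h.symm

lemma g2_eq_g₂ : g2 L.ω₁ L.ω₂ = L.g₂ := by
  rw [g2, tsum_ite_eq_tsum_latticeIndex, tsum_latPt_inv_pow L (by norm_num), PeriodPair.g₂]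

lemma g3_eq_g₃ : g3 L.ω₁ L.ω₂ = L.g₃ := by
  rw [g3, tsum_ite_eq_tsum_latticeIndex, tsum_latPt_inv_pow L (by norm_num), PeriodPair.g₃]

end Identification

section FixedLattice

variable {ω₁ ω₂ z : ℂ}

lemma g2_pow_sub_g3_pow_ne_zero (hω : LinearIndependent ℝ ![ω₁, ω₂]) :
    g2 ω₁ ω₂ ^ 3 - 27 * g3 ω₁ ω₂ ^ 2 ≠ 0 := by
  let L : PeriodPair := ⟨ω₁, ω₂, hω⟩
  simpa only [← g2_eq_g₂, ← g3_eq_g₃] using discriminant_ne_zero L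

lemma wpDeriv_sq (hreg : IsRegularParam (z, ω₁, ω₂)) :
    wpDeriv ω₁ ω₂ z ^ 2 = 4 * wp ω₁ ω₂ z ^ 3 - g2 ω₁ ω₂ * wp ω₁ ω₂ z - g3 ω₁ ω₂ := by
  let L : PeriodPair := ⟨ω₁, ω₂, hreg.1⟩
  have h := L.derivWeierstrassP_sq z (mt (mem_latticeSet_iff L).2 hreg.2)
  simpa only [← wpDeriv_eq_derivWeierstrassP, ← wp_eq_weierstrassP, ← g2_eq_g₂, ← g3_eq_g₃] using h

lemma latPt_zero_zero (p : ℤ × ℤ) : latPt 0 0 p = 0 := by simp [latPt]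

lemma hasDerivAt_wzeta_arg (hreg : IsRegularParam (z, ω₁, ω₂)) :
    HasDerivAt (wzeta ω₁ ω₂) (-wp ω₁ ω₂ z) z := by
  simpa [wzetaVariation, latPt_zero_zero] using
    hasDerivAt_wzeta (hasDerivAt_id z) (hasDerivAt_const z ω₁) (hasDerivAt_const z ω₂) hreg

lemma hasDerivAt_wp_arg (hreg : IsRegularParam (z, ω₁, ω₂)) :
    HasDerivAt (wp ω₁ ω₂) (wpDeriv ω₁ ω₂ z) z := by
  simpa [wpVariation, latPt_zero_zero] using
    hasDerivAt_wp (hasDerivAt_id z) (hasDerivAt_const z ω₁) (hasDerivAt_const z ω₂) hreg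

lemma hasDerivAt_wpDeriv_arg (hreg : IsRegularParam (z, ω₁, ω₂)) :
    HasDerivAt (wpDeriv ω₁ ω₂) (wpDeriv₂ ω₁ ω₂ z) z := by
  simpa [wpDerivVariation, latPt_zero_zero] using
    hasDerivAt_wpDeriv (hasDerivAt_id z) (hasDerivAt_const z ω₁) (hasDerivAt_const z ω₂) hreg

lemma wpDeriv₂_eq (hreg : IsRegularParam (z, ω₁, ω₂)) :
    wpDeriv₂ ω₁ ω₂ z = 6 * wp ω₁ ω₂ z ^ 2 - g2 ω₁ ω₂ / 2 := by
  let L : PeriodPair := ⟨ω₁, ω₂, hreg.1⟩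
  have hL := hasDerivAt_derivWeierstrassP (mt (mem_latticeSet_iff L).2 hreg.2)
  rw [← funext (wpDeriv_eq_derivWeierstrassP L), ← wp_eq_weierstrassP, ← g2_eq_g₂] at hL
  exact (hasDerivAt_wpDeriv_arg hreg).unique hL

end FixedLattice

/-! ### Variation of the lattice in terms of the invariants -/

section Deformation

/-- The vector field `z ↦ α ζ(z) + β z`. -/
noncomputable def deformationField (ω₁ ω₂ α β z : ℂ) : ℂ := α * wzeta ω₁ ω₂ z + β * z

/-- The variation of `℘` when `g₂` and `g₃` move with the velocities `4βg₂ + 6αg₃` and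
`6βg₃ + αg₂² / 3`. -/
noncomputable def wpDeformation (ω₁ ω₂ α β z : ℂ) : ℂ :=
  wpDeriv ω₁ ω₂ z * deformationField ω₁ ω₂ α β z +
    (2 * α * wp ω₁ ω₂ z ^ 2 + 2 * β * wp ω₁ ω₂ z - α * g2 ω₁ ω₂ / 3)

/-- The variation of `℘'` when `g₂` and `g₃` move with the velocities `4βg₂ + 6αg₃` and
`6βg₃ + αg₂² / 3`. -/
noncomputable def wpDerivDeformation (ω₁ ω₂ α β z : ℂ) : ℂ :=
  (6 * wp ω₁ ω₂ z ^ 2 - g2 ω₁ ω₂ / 2) * deformationField ω₁ ω₂ α β z +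
    wpDeriv ω₁ ω₂ z * (3 * β + 3 * α * wp ω₁ ω₂ z)

/-- The variation of `ζ` when `g₂` and `g₃` move with the velocities `4βg₂ + 6αg₃` and
`6βg₃ + αg₂² / 3`. -/
noncomputable def wzetaDeformation (ω₁ ω₂ α β z : ℂ) : ℂ :=
  -wp ω₁ ω₂ z * deformationField ω₁ ω₂ α β z - α * wpDeriv ω₁ ω₂ z / 2 + β * wzeta ω₁ ω₂ z +
    α * g2 ω₁ ω₂ * z / 12

/-- The direction `(v₁, v₂)` in the space of periods moves `g₂` and `g₃` with the velocities
`4βg₂ + 6αg₃` and `6βg₃ + αg₂² / 3`, encoded by the linearised equation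
`℘'² = 4℘³ - g₂℘ - g₃`. -/
def IsDeformationDirection (ω₁ ω₂ v₁ v₂ α β : ℂ) : Prop :=
  ∀ z ∉ latticeSet ω₁ ω₂,
    2 * wpDeriv ω₁ ω₂ z * wpDerivVariation ω₁ ω₂ v₁ v₂ z =
      (12 * wp ω₁ ω₂ z ^ 2 - g2 ω₁ ω₂) * wpVariation ω₁ ω₂ v₁ v₂ z -
        (4 * β * g2 ω₁ ω₂ + 6 * α * g3 ω₁ ω₂) * wp ω₁ ω₂ z -
        (6 * β * g3 ω₁ ω₂ + α * g2 ω₁ ω₂ ^ 2 / 3)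

variable {ω₁ ω₂ v₁ v₂ z : ℂ} (α β : ℂ)

lemma hasDerivAt_deformationField (hreg : IsRegularParam (z, ω₁, ω₂)) :
    HasDerivAt (deformationField ω₁ ω₂ α β) (-α * wp ω₁ ω₂ z + β) z :=
  (((hasDerivAt_wzeta_arg hreg).const_mul α).add ((hasDerivAt_id z).const_mul β)).congr_deriv
    (by ring)

lemma hasDerivAt_wpDeformation (hreg : IsRegularParam (z, ω₁, ω₂)) :
    HasDerivAt (wpDeformation ω₁ ω₂ α β) (wpDerivDeformation ω₁ ω₂ α β z) z := by
  have hP := hasDerivAt_wp_arg hreg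
  refine (((hasDerivAt_wpDeriv_arg hreg).mul (hasDerivAt_deformationField α β hreg)).add
    ((((hP.fun_pow 2).const_mul (2 * α)).add (hP.const_mul (2 * β))).sub_const
      (α * g2 ω₁ ω₂ / 3))).congr_deriv ?_
  rw [wpDeriv₂_eq hreg, wpDerivDeformation]
  push_cast
  ring

lemma hasDerivAt_wzetaDeformation (hreg : IsRegularParam (z, ω₁, ω₂)) :
    HasDerivAt (wzetaDeformation ω₁ ω₂ α β) (-wpDeformation ω₁ ω₂ α β z) z := by
  refine ((((hasDerivAt_wp_arg hreg).neg.mul (hasDerivAt_deformationField α β hreg)).sub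
    (((hasDerivAt_wpDeriv_arg hreg).const_mul α).div_const 2)).add
      ((hasDerivAt_wzeta_arg hreg).const_mul β)).add
      (((hasDerivAt_id z).const_mul (α * g2 ω₁ ω₂)).div_const 12) |>.congr_deriv ?_
  rw [wpDeriv₂_eq hreg, wpDeformation, Pi.neg_apply]
  ring

variable (ω₁ ω₂ z) in
lemma deformationField_neg :
    deformationField ω₁ ω₂ α β (-z) = -deformationField ω₁ ω₂ α β z := by
  rw [deformationField, deformationField, wzeta_neg]
  ring

lemma neg_notMem_latticeSet (hz : z ∉ latticeSet ω₁ ω₂) : -z ∉ latticeSet ω₁ ω₂ := by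
  rintro ⟨m, n, h⟩
  exact hz ⟨-m, -n, by push_cast; linear_combination -h⟩

variable (ω₁ ω₂ z) in
lemma wpDeformation_neg : wpDeformation ω₁ ω₂ α β (-z) = wpDeformation ω₁ ω₂ α β z := by
  simp only [wpDeformation, wp_neg, wpDeriv_neg, deformationField_neg, neg_mul_neg]

variable (ω₁ ω₂ z) in
lemma wzetaDeformation_neg :
    wzetaDeformation ω₁ ω₂ α β (-z) = -wzetaDeformation ω₁ ω₂ α β z := by
  simp only [wzetaDeformation, wp_neg, wpDeriv_neg, wzeta_neg, deformationField_neg]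
  ring

lemma isOpen_compl_latticeSet (hω : LinearIndependent ℝ ![ω₁, ω₂]) :
    IsOpen (latticeSet ω₁ ω₂)ᶜ := by
  let L : PeriodPair := ⟨ω₁, ω₂, hω⟩
  have h : latticeSet ω₁ ω₂ = L.lattice := Set.ext fun z => mem_latticeSet_iff L
  exact h ▸ L.isClosed_lattice.isOpen_compl

lemma isPreconnected_compl_latticeSet (hω : LinearIndependent ℝ ![ω₁, ω₂]) :
    IsPreconnected (latticeSet ω₁ ω₂)ᶜ := by
  let L : PeriodPair := ⟨ω₁, ω₂, hω⟩
  have h : latticeSet ω₁ ω₂ = L.lattice := Set.ext fun z => mem_latticeSet_iff L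
  exact h ▸ isPreconnected_compl_lattice L

lemma exists_wpDeriv_ne_zero (hω : LinearIndependent ℝ ![ω₁, ω₂]) :
    ∃ z ∈ (latticeSet ω₁ ω₂)ᶜ, wpDeriv ω₁ ω₂ z ≠ 0 := by
  let L : PeriodPair := ⟨ω₁, ω₂, hω⟩
  obtain ⟨z, hz, hne⟩ := exists_derivWeierstrassP_ne_zero L
  exact ⟨z, mt (mem_latticeSet_iff L).1 hz, (wpDeriv_eq_derivWeierstrassP L z).trans_ne hne⟩

variable {α β}

namespace IsDeformationDirection

-- Both sides solve the same first order linear equation, whose homogeneous solutions are the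
-- multiples of the odd function `℘'`; both being even, they agree.
lemma wpVariation_eq (h : IsDeformationDirection ω₁ ω₂ v₁ v₂ α β)
    (hreg : IsRegularParam (z, ω₁, ω₂)) :
    wpVariation ω₁ ω₂ v₁ v₂ z = wpDeformation ω₁ ω₂ α β z := by
  have hω : LinearIndependent ℝ ![ω₁, ω₂] := hreg.1
  have hregular (w : ℂ) (hw : w ∈ (latticeSet ω₁ ω₂)ᶜ) : IsRegularParam (w, ω₁, ω₂) := ⟨hω, hw⟩
  obtain ⟨z₀, hz₀, hne⟩ := exists_wpDeriv_ne_zero hω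
  obtain ⟨c, hc⟩ := exists_eq_mul_of_wronskian_eq_zero (isOpen_compl_latticeSet hω)
    (isPreconnected_compl_latticeSet hω)
    (fun w hw => (hasDerivAt_wpVariation (hregular w hw) v₁ v₂).sub
      (hasDerivAt_wpDeformation α β (hregular w hw)))
    (fun w hw => hasDerivAt_wpDeriv_arg (hregular w hw))
    (fun w hw => by
      rw [wpDeriv₂_eq (hregular w hw), Pi.sub_apply, wpDeformation, wpDerivDeformation]
      linear_combination (1 / 2 : ℂ) * h w hw -
        (3 * β + 3 * α * wp ω₁ ω₂ w) * wpDeriv_sq (hregular w hw)) ⟨z₀, hz₀, hne⟩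
  simp only [Pi.sub_apply] at hc
  have hc₀ : c = 0 := by
    have hneg := hc (-z₀) (neg_notMem_latticeSet hz₀)
    rw [wpVariation_neg, wpDeformation_neg, wpDeriv_neg] at hneg
    have hmul : c * wpDeriv ω₁ ω₂ z₀ = 0 := by
      linear_combination (1 / 2 : ℂ) * (hneg - hc z₀ hz₀)
    exact (mul_eq_zero.1 hmul).resolve_right hne
  exact sub_eq_zero.1 ((hc z hreg.2).trans (by rw [hc₀, zero_mul]))

lemma wpDerivVariation_eq (h : IsDeformationDirection ω₁ ω₂ v₁ v₂ α β)
    (hreg : IsRegularParam (z, ω₁, ω₂)) :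
    wpDerivVariation ω₁ ω₂ v₁ v₂ z = wpDerivDeformation ω₁ ω₂ α β z := by
  refine (hasDerivAt_wpVariation hreg v₁ v₂).unique
    ((hasDerivAt_wpDeformation α β hreg).congr_of_eventuallyEq ?_)
  filter_upwards [(isOpen_compl_latticeSet hreg.1).mem_nhds hreg.2] with w hw
  exact h.wpVariation_eq ⟨hreg.1, hw⟩

lemma wzetaVariation_eq (h : IsDeformationDirection ω₁ ω₂ v₁ v₂ α β)
    (hreg : IsRegularParam (z, ω₁, ω₂)) :
    wzetaVariation ω₁ ω₂ v₁ v₂ z = wzetaDeformation ω₁ ω₂ α β z := by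
  have hω : LinearIndependent ℝ ![ω₁, ω₂] := hreg.1
  have hregular (w : ℂ) (hw : w ∈ (latticeSet ω₁ ω₂)ᶜ) : IsRegularParam (w, ω₁, ω₂) := ⟨hω, hw⟩
  have hderiv (w : ℂ) (hw : w ∈ (latticeSet ω₁ ω₂)ᶜ) :
      HasDerivAt (wzetaVariation ω₁ ω₂ v₁ v₂ - wzetaDeformation ω₁ ω₂ α β) 0 w :=
    ((hasDerivAt_wzetaVariation (hregular w hw) v₁ v₂).sub
      (hasDerivAt_wzetaDeformation α β (hregular w hw))).congr_deriv
        (by rw [h.wpVariation_eq (hregular w hw), sub_self])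
  have hconst := (isOpen_compl_latticeSet hω).is_const_of_deriv_eq_zero
    (isPreconnected_compl_latticeSet hω)
    (fun w hw => (hderiv w hw).differentiableAt.differentiableWithinAt)
    (fun w hw => (hderiv w hw).deriv) hreg.2 (neg_notMem_latticeSet hreg.2)
  rw [Pi.sub_apply, Pi.sub_apply, wzetaVariation_neg, wzetaDeformation_neg] at hconst
  linear_combination (1 / 2 : ℂ) * hconst

end IsDeformationDirection

lemma eventually_isRegularParam {X : Type*} [TopologicalSpace X] {a ω₁ ω₂ : X → ℂ} {t : X}
    (ha : ContinuousAt a t) (h₁ : ContinuousAt ω₁ t) (h₂ : ContinuousAt ω₂ t)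
    (hω : ∀ᶠ s in 𝓝 t, LinearIndependent ℝ ![ω₁ s, ω₂ s])
    (ht : a t ∉ latticeSet (ω₁ t) (ω₂ t)) :
    ∀ᶠ s in 𝓝 t, IsRegularParam (a s, ω₁ s, ω₂ s) := by
  have hreg : IsRegularParam (a t, ω₁ t, ω₂ t) := ⟨hω.self_of_nhds, ht⟩
  have hpath : ContinuousAt (fun s => ((a s, ω₁ s, ω₂ s) : LatticeParam)) t :=
    ha.prodMk (h₁.prodMk h₂)
  filter_upwards [hω, ha.eventually_ne hreg.arg_ne_zero,
    hpath.eventually (eventually_add_latPt_ne_zero hreg)] with s hind hne hadd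
  refine ⟨hind, ?_⟩
  rintro ⟨m, n, hmn⟩
  have hmn₀ : (-m, -n) ≠ (0 : ℤ × ℤ) := by
    rintro h
    obtain ⟨rfl, rfl⟩ : m = 0 ∧ n = 0 := by simpa using h
    exact hne (by simpa using hmn)
  refine hadd ⟨_, hmn₀⟩ ?_
  simp only [latPt] at hmn ⊢
  push_cast
  linear_combination hmn

section Path

variable {𝕜 : Type*} [NontriviallyNormedField 𝕜] [NormedAlgebra 𝕜 ℂ] {a ω₁ ω₂ : 𝕜 → ℂ}
  {a' v₁ v₂ α β : ℂ} {t : 𝕜}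

lemma isDeformationDirection_of_hasDerivAt (h₁ : HasDerivAt ω₁ v₁ t) (h₂ : HasDerivAt ω₂ v₂ t)
    (hω : ∀ᶠ s in 𝓝 t, LinearIndependent ℝ ![ω₁ s, ω₂ s])
    (hg₂ : HasDerivAt (fun s => g2 (ω₁ s) (ω₂ s))
      (4 * β * g2 (ω₁ t) (ω₂ t) + 6 * α * g3 (ω₁ t) (ω₂ t)) t)
    (hg₃ : HasDerivAt (fun s => g3 (ω₁ s) (ω₂ s))
      (6 * β * g3 (ω₁ t) (ω₂ t) + α * g2 (ω₁ t) (ω₂ t) ^ 2 / 3) t) :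
    IsDeformationDirection (ω₁ t) (ω₂ t) v₁ v₂ α β := by
  intro z hz
  have hreg : IsRegularParam (z, ω₁ t, ω₂ t) := ⟨hω.self_of_nhds, hz⟩
  have hP := hasDerivAt_wp (hasDerivAt_const t z) h₁ h₂ hreg
  have hP' := hasDerivAt_wpDeriv (hasDerivAt_const t z) h₁ h₂ hreg
  have hcubic : (fun s => wpDeriv (ω₁ s) (ω₂ s) z ^ 2) =ᶠ[𝓝 t] fun s =>
      4 * wp (ω₁ s) (ω₂ s) z ^ 3 - g2 (ω₁ s) (ω₂ s) * wp (ω₁ s) (ω₂ s) z - g3 (ω₁ s) (ω₂ s) :=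
    (eventually_isRegularParam continuousAt_const h₁.continuousAt h₂.continuousAt hω hz).mono
      fun s hs => wpDeriv_sq hs
  have hunique := (hP'.fun_pow 2).unique
    (((((hP.fun_pow 3).const_mul 4).sub (hg₂.mul hP)).sub hg₃).congr_of_eventuallyEq hcubic)
  push_cast at hunique
  linear_combination hunique

variable (ha : HasDerivAt a a' t) (h₁ : HasDerivAt ω₁ v₁ t) (h₂ : HasDerivAt ω₂ v₂ t)
  (hreg : IsRegularParam (a t, ω₁ t, ω₂ t))
  (h : IsDeformationDirection (ω₁ t) (ω₂ t) v₁ v₂ α β)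

include ha h₁ h₂ hreg h

lemma IsDeformationDirection.hasDerivAt_wp :
    HasDerivAt (fun s => wp (ω₁ s) (ω₂ s) (a s))
      (wpDeriv (ω₁ t) (ω₂ t) (a t) * (a' + deformationField (ω₁ t) (ω₂ t) α β (a t)) +
        (2 * α * wp (ω₁ t) (ω₂ t) (a t) ^ 2 + 2 * β * wp (ω₁ t) (ω₂ t) (a t) -
          α * g2 (ω₁ t) (ω₂ t) / 3)) t := by
  refine (WeierstrassElliptic.hasDerivAt_wp ha h₁ h₂ hreg).congr_deriv ?_
  rw [h.wpVariation_eq hreg, wpDeformation]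
  ring

lemma IsDeformationDirection.hasDerivAt_wpDeriv :
    HasDerivAt (fun s => wpDeriv (ω₁ s) (ω₂ s) (a s))
      ((6 * wp (ω₁ t) (ω₂ t) (a t) ^ 2 - g2 (ω₁ t) (ω₂ t) / 2) *
        (a' + deformationField (ω₁ t) (ω₂ t) α β (a t)) +
        wpDeriv (ω₁ t) (ω₂ t) (a t) * (3 * β + 3 * α * wp (ω₁ t) (ω₂ t) (a t))) t := by
  refine (WeierstrassElliptic.hasDerivAt_wpDeriv ha h₁ h₂ hreg).congr_deriv ?_
  rw [h.wpDerivVariation_eq hreg, wpDerivDeformation, wpDeriv₂_eq hreg]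
  ring

lemma IsDeformationDirection.hasDerivAt_wzeta :
    HasDerivAt (fun s => wzeta (ω₁ s) (ω₂ s) (a s))
      (-wp (ω₁ t) (ω₂ t) (a t) * (a' + deformationField (ω₁ t) (ω₂ t) α β (a t)) -
        α * wpDeriv (ω₁ t) (ω₂ t) (a t) / 2 + β * wzeta (ω₁ t) (ω₂ t) (a t) +
          α * g2 (ω₁ t) (ω₂ t) * a t / 12) t := by
  refine (WeierstrassElliptic.hasDerivAt_wzeta ha h₁ h₂ hreg).congr_deriv ?_
  rw [h.wzetaVariation_eq hreg, wzetaDeformation]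
  ring

end Path

end Deformation

/-! ### The differential system of a point with algebraic coordinates -/

section DifferentialSystem

lemma AlgebraicOverCt.mem_algebraicFunctions {c : ℝ → ℂ} (h : AlgebraicOverCt c)
    (hc : DifferentiableOn ℝ c (Set.Ioo 0 1)) : c ∈ algebraicFunctions :=
  mem_algebraicFunctions_of_isIntegral h.isIntegral hc

lemma dFiniteT_of_affine_system {a b p q r p' q' r' : ℝ → ℂ} (hp : p ∈ algebraicFunctions)
    (hq : q ∈ algebraicFunctions) (hr : r ∈ algebraicFunctions) (hp' : p' ∈ algebraicFunctions)
    (hq' : q' ∈ algebraicFunctions) (hr' : r' ∈ algebraicFunctions)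
    (ha : ∀ t ∈ Set.Ioo (0 : ℝ) 1, HasDerivAt a (p t + q t * a t + r t * b t) t)
    (hb : ∀ t ∈ Set.Ioo (0 : ℝ) 1, HasDerivAt b (p' t + q' t * a t + r' t * b t) t) :
    DFiniteT a ∧ DFiniteT b := by
  let M : Fin 3 → Fin 3 → ℝ → ℂ := ![![0, 0, 0], ![p, q, r], ![p', q', r']]
  have hM (i j) : M i j ∈ algebraicFunctions := by
    fin_cases i <;> fin_cases j <;> simp [M, *, zero_mem]
  have hy (i) (t) (ht : t ∈ Set.Ioo (0 : ℝ) 1) :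
      HasDerivAt ((![1, a, b] : Fin 3 → ℝ → ℂ) i) (∑ j, M i j t * ![1, a, b] j t) t := by
    fin_cases i <;> simp only [Fin.sum_univ_three]
    · exact (hasDerivAt_const t (1 : ℂ)).congr_deriv (by simp [M])
    · simpa [M] using ha t ht
    · simpa [M] using hb t ht
  exact ⟨dFiniteT_of_linear_system hM hy 1, dFiniteT_of_linear_system hM hy 2⟩

-- The identity comes from the Bézout relation expressing the discriminant through the cubic
-- `4x³ - g₂x - g₃` and its derivative.
lemma eq_of_tangent_equations {K : Type*} [Field K] [CharZero K] {x y g₂ g₃ δ Γ u v : K}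
    (hδ : (g₂ ^ 3 - 27 * g₃ ^ 2) * δ = 1) (hxy : y ^ 2 = 4 * x ^ 3 - g₂ * x - g₃)
    (hu : u = y * Γ) (hv : v = (6 * x ^ 2 - g₂ / 2) * Γ) :
    Γ = δ * ((27 * g₃ - 18 * g₂ * x) * (y * u) +
      (12 * g₂ * x ^ 2 - 18 * g₃ * x - 2 * g₂ ^ 2) * v) := by
  rw [hu, hv]
  linear_combination (-Γ) * hδ - (δ * (27 * g₃ - 18 * g₂ * x) * Γ) * hxy

variable {x y G₂ G₃ Γ : ℝ → ℂ}

lemma inv_discriminant_mem_algebraicFunctions (h₂ : G₂ ∈ algebraicFunctions)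
    (h₃ : G₃ ∈ algebraicFunctions)
    (hΔ : ∀ t ∈ Set.Ioo (0 : ℝ) 1, G₂ t ^ 3 - 27 * G₃ t ^ 2 ≠ 0) :
    (G₂ ^ 3 - 27 * G₃ ^ 2)⁻¹ ∈ algebraicFunctions :=
  inv_mem_algebraicFunctions
    (sub_mem (pow_mem h₂ 3) (mul_mem (ofNat_mem _ 27) (pow_mem h₃ 2))) hΔ

lemma exists_deformation_coefficients (h₂ : G₂ ∈ algebraicFunctions)
    (h₃ : G₃ ∈ algebraicFunctions)
    (hΔ : ∀ t ∈ Set.Ioo (0 : ℝ) 1, G₂ t ^ 3 - 27 * G₃ t ^ 2 ≠ 0) :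
    ∃ α ∈ algebraicFunctions, ∃ β ∈ algebraicFunctions, ∀ t ∈ Set.Ioo (0 : ℝ) 1,
      deriv G₂ t = 4 * β t * G₂ t + 6 * α t * G₃ t ∧
        deriv G₃ t = 6 * β t * G₃ t + α t * G₂ t ^ 2 / 3 := by
  have hΔmem := inv_discriminant_mem_algebraicFunctions h₂ h₃ hΔ
  have h₂' := deriv_mem_algebraicFunctions h₂
  have h₃' := deriv_mem_algebraicFunctions h₃
  refine ⟨(G₂ ^ 3 - 27 * G₃ ^ 2)⁻¹ *
      (3 * G₂ * deriv G₃ - (9 / 2 : ℂ) • (G₃ * deriv G₂)), ?_,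
    (G₂ ^ 3 - 27 * G₃ ^ 2)⁻¹ *
      ((1 / 4 : ℂ) • (G₂ ^ 2 * deriv G₂) - (9 / 2 : ℂ) • (G₃ * deriv G₃)), ?_, fun t ht => ?_⟩
  · aesop
  · aesop
  have hinv := mul_inv_cancel₀ (hΔ t ht)
  simp only [Pi.mul_apply, Pi.inv_apply, Pi.sub_apply, Pi.pow_apply, Pi.smul_apply,
    Pi.ofNat_apply, smul_eq_mul]
  constructor
  · linear_combination -deriv G₂ t * hinv
  · linear_combination -deriv G₃ t * hinv

lemma exists_mem_algebraicFunctions_eq (h₂ : G₂ ∈ algebraicFunctions)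
    (h₃ : G₃ ∈ algebraicFunctions)
    (hΔ : ∀ t ∈ Set.Ioo (0 : ℝ) 1, G₂ t ^ 3 - 27 * G₃ t ^ 2 ≠ 0)
    (hx : x ∈ algebraicFunctions) (hy : y ∈ algebraicFunctions)
    (hxy : ∀ t ∈ Set.Ioo (0 : ℝ) 1, y t ^ 2 = 4 * x t ^ 3 - G₂ t * x t - G₃ t)
    {Q R : ℝ → ℂ} (hQ : Q ∈ algebraicFunctions) (hR : R ∈ algebraicFunctions)
    (hx' : ∀ t ∈ Set.Ioo (0 : ℝ) 1, deriv x t = y t * Γ t + Q t)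
    (hy' : ∀ t ∈ Set.Ioo (0 : ℝ) 1, deriv y t = (6 * x t ^ 2 - G₂ t / 2) * Γ t + R t) :
    ∃ γ ∈ algebraicFunctions, ∀ t ∈ Set.Ioo (0 : ℝ) 1, Γ t = γ t := by
  have hΔmem := inv_discriminant_mem_algebraicFunctions h₂ h₃ hΔ
  have hu := sub_mem (deriv_mem_algebraicFunctions hx) hQ
  have hv := sub_mem (deriv_mem_algebraicFunctions hy) hR
  refine ⟨(G₂ ^ 3 - 27 * G₃ ^ 2)⁻¹ * ((27 * G₃ - 18 * G₂ * x) * (y * (deriv x - Q)) +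
    (12 * G₂ * x ^ 2 - 18 * G₃ * x - 2 * G₂ ^ 2) * (deriv y - R)), ?_, fun t ht => ?_⟩
  · aesop
  · exact eq_of_tangent_equations (mul_inv_cancel₀ (hΔ t ht)) (hxy t ht)
      (sub_eq_of_eq_add (hx' t ht)) (sub_eq_of_eq_add (hy' t ht))

end DifferentialSystem

/-! ### Points moving with the lattice -/

/-- A point `a(t)` off the lattice spanned by `ω₁(t)` and `ω₂(t)`, all three depending
differentiably on `t ∈ (0,1)`. -/
structure IsRegularPath (ω₁ ω₂ a : ℝ → ℂ) : Prop where
  differentiableOn_period₁ : DifferentiableOn ℝ ω₁ (Set.Ioo 0 1)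
  differentiableOn_period₂ : DifferentiableOn ℝ ω₂ (Set.Ioo 0 1)
  differentiableOn_point : DifferentiableOn ℝ a (Set.Ioo 0 1)
  isRegularParam : ∀ t ∈ Set.Ioo (0 : ℝ) 1, IsRegularParam (a t, ω₁ t, ω₂ t)

namespace IsRegularPath

variable {ω₁ ω₂ a α β : ℝ → ℂ} {t : ℝ} (h : IsRegularPath ω₁ ω₂ a)

include h

section Derivatives

variable (ht : t ∈ Set.Ioo (0 : ℝ) 1)

include ht

lemma hasDerivAt_period₁ : HasDerivAt ω₁ (deriv ω₁ t) t :=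
  (h.differentiableOn_period₁.differentiableAt (isOpen_Ioo.mem_nhds ht)).hasDerivAt

lemma hasDerivAt_period₂ : HasDerivAt ω₂ (deriv ω₂ t) t :=
  (h.differentiableOn_period₂.differentiableAt (isOpen_Ioo.mem_nhds ht)).hasDerivAt

lemma hasDerivAt_point : HasDerivAt a (deriv a t) t :=
  (h.differentiableOn_point.differentiableAt (isOpen_Ioo.mem_nhds ht)).hasDerivAt

lemma differentiableAt_g2 : DifferentiableAt ℝ (fun s => g2 (ω₁ s) (ω₂ s)) t :=
  WeierstrassElliptic.differentiableAt_g2 (h.hasDerivAt_point ht) (h.hasDerivAt_period₁ ht)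
    (h.hasDerivAt_period₂ ht) (h.isRegularParam t ht)

lemma differentiableAt_g3 : DifferentiableAt ℝ (fun s => g3 (ω₁ s) (ω₂ s)) t :=
  WeierstrassElliptic.differentiableAt_g3 (h.hasDerivAt_point ht) (h.hasDerivAt_period₁ ht)
    (h.hasDerivAt_period₂ ht) (h.isRegularParam t ht)

lemma differentiableAt_wp : DifferentiableAt ℝ (fun s => wp (ω₁ s) (ω₂ s) (a s)) t :=
  (hasDerivAt_wp (h.hasDerivAt_point ht) (h.hasDerivAt_period₁ ht) (h.hasDerivAt_period₂ ht)
    (h.isRegularParam t ht)).differentiableAt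

lemma differentiableAt_wpDeriv : DifferentiableAt ℝ (fun s => wpDeriv (ω₁ s) (ω₂ s) (a s)) t :=
  (hasDerivAt_wpDeriv (h.hasDerivAt_point ht) (h.hasDerivAt_period₁ ht)
    (h.hasDerivAt_period₂ ht) (h.isRegularParam t ht)).differentiableAt

lemma discriminant_ne_zero : g2 (ω₁ t) (ω₂ t) ^ 3 - 27 * g3 (ω₁ t) (ω₂ t) ^ 2 ≠ 0 :=
  g2_pow_sub_g3_pow_ne_zero (h.isRegularParam t ht).1

end Derivatives

variable (h₂ : (fun t => g2 (ω₁ t) (ω₂ t)) ∈ algebraicFunctions)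
  (h₃ : (fun t => g3 (ω₁ t) (ω₂ t)) ∈ algebraicFunctions)

include h₂ h₃

lemma exists_isDeformationDirection :
    ∃ α ∈ algebraicFunctions, ∃ β ∈ algebraicFunctions, ∀ t ∈ Set.Ioo (0 : ℝ) 1,
      IsDeformationDirection (ω₁ t) (ω₂ t) (deriv ω₁ t) (deriv ω₂ t) (α t) (β t) := by
  obtain ⟨α, hα, β, hβ, heq⟩ :=
    exists_deformation_coefficients h₂ h₃ fun t ht => h.discriminant_ne_zero ht
  refine ⟨α, hα, β, hβ, fun t ht => ?_⟩
  have hω : ∀ᶠ s in 𝓝 t, LinearIndependent ℝ ![ω₁ s, ω₂ s] :=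
    eventually_of_mem (isOpen_Ioo.mem_nhds ht) fun s hs => (h.isRegularParam s hs).1
  exact isDeformationDirection_of_hasDerivAt (h.hasDerivAt_period₁ ht) (h.hasDerivAt_period₂ ht)
    hω ((h.differentiableAt_g2 ht).hasDerivAt.congr_deriv (heq t ht).1)
    ((h.differentiableAt_g3 ht).hasDerivAt.congr_deriv (heq t ht).2)

variable (hx : (fun t => wp (ω₁ t) (ω₂ t) (a t)) ∈ algebraicFunctions)

include hx

lemma wpDeriv_mem_algebraicFunctions :
    (fun t => wpDeriv (ω₁ t) (ω₂ t) (a t)) ∈ algebraicFunctions :=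
  mem_algebraicFunctions_of_sq
    (fun _ ht => (h.differentiableAt_wpDeriv ht).differentiableWithinAt)
    (sub_mem (sub_mem (mul_mem (ofNat_mem _ 4) (pow_mem hx 3)) (mul_mem h₂ hx)) h₃)
    fun t ht => wpDeriv_sq (h.isRegularParam t ht)

lemma exists_deriv_add_deformationField_eq (hα : α ∈ algebraicFunctions)
    (hβ : β ∈ algebraicFunctions) (hdir : ∀ t ∈ Set.Ioo (0 : ℝ) 1,
      IsDeformationDirection (ω₁ t) (ω₂ t) (deriv ω₁ t) (deriv ω₂ t) (α t) (β t)) :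
    ∃ γ ∈ algebraicFunctions, ∀ t ∈ Set.Ioo (0 : ℝ) 1,
      deriv a t + deformationField (ω₁ t) (ω₂ t) (α t) (β t) (a t) = γ t := by
  have hy := h.wpDeriv_mem_algebraicFunctions h₂ h₃ hx
  set x : ℝ → ℂ := fun t => wp (ω₁ t) (ω₂ t) (a t)
  set y : ℝ → ℂ := fun t => wpDeriv (ω₁ t) (ω₂ t) (a t)
  set G₂ : ℝ → ℂ := fun t => g2 (ω₁ t) (ω₂ t)
  have hQ : 2 * α * x ^ 2 + 2 * β * x - (1 / 3 : ℂ) • (α * G₂) ∈ algebraicFunctions := by aesop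
  have hR : y * (3 * β + 3 * α * x) ∈ algebraicFunctions := by aesop
  refine exists_mem_algebraicFunctions_eq h₂ h₃ (fun t ht => h.discriminant_ne_zero ht) hx hy
    (fun t ht => wpDeriv_sq (h.isRegularParam t ht)) hQ hR (fun t ht => ?_) fun t ht => ?_
  · refine ((hdir t ht).hasDerivAt_wp (h.hasDerivAt_point ht) (h.hasDerivAt_period₁ ht)
      (h.hasDerivAt_period₂ ht) (h.isRegularParam t ht)).deriv.trans ?_
    simp only [x, G₂, Pi.add_apply, Pi.sub_apply, Pi.mul_apply, Pi.pow_apply, Pi.smul_apply,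
      Pi.ofNat_apply, smul_eq_mul]
    ring
  · exact ((hdir t ht).hasDerivAt_wpDeriv (h.hasDerivAt_point ht) (h.hasDerivAt_period₁ ht)
      (h.hasDerivAt_period₂ ht) (h.isRegularParam t ht)).deriv

lemma dFiniteT_point_and_wzeta :
    DFiniteT a ∧ DFiniteT (fun t => wzeta (ω₁ t) (ω₂ t) (a t)) := by
  obtain ⟨α, hα, β, hβ, hdir⟩ := h.exists_isDeformationDirection h₂ h₃
  obtain ⟨γ, hγ, hΓ⟩ := h.exists_deriv_add_deformationField_eq h₂ h₃ hx hα hβ hdir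
  have hy := h.wpDeriv_mem_algebraicFunctions h₂ h₃ hx
  refine dFiniteT_of_affine_system hγ (neg_mem hβ) (neg_mem hα)
    (sub_mem (mul_mem (neg_mem hx) hγ)
      (SMulMemClass.smul_mem (1 / 2 : ℂ) (mul_mem hα hy)))
    (SMulMemClass.smul_mem (1 / 12 : ℂ) (mul_mem hα h₂)) hβ (fun t ht => ?_) fun t ht => ?_
  · refine (h.hasDerivAt_point ht).congr_deriv ?_
    rw [← hΓ t ht, deformationField, Pi.neg_apply, Pi.neg_apply]
    ring
  · refine ((hdir t ht).hasDerivAt_wzeta (h.hasDerivAt_point ht) (h.hasDerivAt_period₁ ht)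
      (h.hasDerivAt_period₂ ht) (h.isRegularParam t ht)).congr_deriv ?_
    simp only [hΓ t ht, Pi.sub_apply, Pi.mul_apply, Pi.neg_apply, Pi.smul_apply, smul_eq_mul]
    ring

end IsRegularPath

theorem statement14_general {ω₁ ω₂ a : ℝ → ℂ} (hd1 : DifferentiableOn ℝ ω₁ (Set.Ioo 0 1))
    (hd2 : DifferentiableOn ℝ ω₂ (Set.Ioo 0 1))
    (hindep : ∀ t ∈ Set.Ioo (0 : ℝ) 1, LinearIndependent ℝ ![ω₁ t, ω₂ t])
    (hg2 : AlgebraicOverCt (fun t => g2 (ω₁ t) (ω₂ t)))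
    (hg3 : AlgebraicOverCt (fun t => g3 (ω₁ t) (ω₂ t)))
    (hda : DifferentiableOn ℝ a (Set.Ioo 0 1))
    (haLat : ∀ t ∈ Set.Ioo (0 : ℝ) 1, a t ∉ latticeSet (ω₁ t) (ω₂ t))
    (hwpa : AlgebraicOverCt (fun t => wp (ω₁ t) (ω₂ t) (a t))) :
    DFiniteT a ∧ DFiniteT (fun t => wzeta (ω₁ t) (ω₂ t) (a t)) := by
  have h : IsRegularPath ω₁ ω₂ a := ⟨hd1, hd2, hda, fun t ht => ⟨hindep t ht, haLat t ht⟩⟩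
  have h₂ := hg2.mem_algebraicFunctions fun t ht =>
    (h.differentiableAt_g2 ht).differentiableWithinAt
  have h₃ := hg3.mem_algebraicFunctions fun t ht =>
    (h.differentiableAt_g3 ht).differentiableWithinAt
  have hx := hwpa.mem_algebraicFunctions fun t ht =>
    (h.differentiableAt_wp ht).differentiableWithinAt
  exact h.dFiniteT_point_and_wzeta h₂ h₃ hx

/-- Assume `ω₁, ω₂ : (0,1) → ℂ` are differentiable and pointwise
`ℝ`-linearly independent, and `g₂(t), g₃(t)` are algebraic over `ℂ(t)`.  Let
`a : (0,1) → ℂ` be differentiable, avoiding the lattice, with `t ↦ ℘(a(t),t)` algebraic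
over `ℂ(t)` and `t ↦ ℘'(a(t),t)` not identically zero.  Then `t ↦ a(t)` and
`t ↦ ζ(a(t),t)` are D-finite. -/
theorem statement14 (ω₁ ω₂ : ℝ → ℂ)
    (hd1 : DifferentiableOn ℝ ω₁ (Set.Ioo 0 1))
    (hd2 : DifferentiableOn ℝ ω₂ (Set.Ioo 0 1))
    (hindep : ∀ t ∈ Set.Ioo (0 : ℝ) 1, LinearIndependent ℝ ![ω₁ t, ω₂ t])
    (hg2 : AlgebraicOverCt (fun t => g2 (ω₁ t) (ω₂ t)))
    (hg3 : AlgebraicOverCt (fun t => g3 (ω₁ t) (ω₂ t)))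
    (a : ℝ → ℂ) (hda : DifferentiableOn ℝ a (Set.Ioo 0 1))
    (haLat : ∀ t ∈ Set.Ioo (0 : ℝ) 1, a t ∉ latticeSet (ω₁ t) (ω₂ t))
    (hwpa : AlgebraicOverCt (fun t => wp (ω₁ t) (ω₂ t) (a t)))
    (hwp'a : ¬ ∀ t ∈ Set.Ioo (0 : ℝ) 1, deriv (wp (ω₁ t) (ω₂ t)) (a t) = 0) :
    DFiniteT a ∧ DFiniteT (fun t => wzeta (ω₁ t) (ω₂ t) (a t)) :=
  statement14_general hd1 hd2 hindep hg2 hg3 hda haLat hwpa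

end WeierstrassElliptic
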